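/- Let A be a Noetherian local complete intersection ring and let M, N be finitely generated A-modules. If Tor_i^A(M,N) ≠ 0 for some i > dim(A), then there exists a nonempty finite subset 𝒜 of Spec(A) such that for every p ∈ 𝒜, either p ∈ Ass_A(Tor_{2i}^A(M,N)) for all i ≫ 0, or p ∈ Ass_A(Tor_{2i+1}^A(M,N)) for all i ≫ 0. -/

import Mathlib

/-!
Resolve `N` by matrices over `A` and extend them to the completion `R = Q/(f₀, …, f_{c-1})`, which
is faithfully flat over `A`. Lifting the entries to `Q` gives matrices `d` with `d² = ∑ f_k t_k`; the
`t_k` are the Eisenbud operators, of degree `-2`. They commute with `d` modulo the `f_k` and with each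
other up to homotopy. The mapping cone of the last operator, with `f_c` as an additional component
(`CIData.cone`), is a sequence of the same kind with one `f` fewer, exact modulo the remaining
ones. So the number of the `f_k` is lowered by induction until an exact sequence of free modules over
`Q` is left, which splits from degree `dim Q` on because `Q` is regular (`splitsFrom_of_regular`).

Let `X` be a module over an `R`-algebra. The long exact sequence of the cone,
written out with cycles and boundaries, gives by this induction

* rigidity (`CIData.rigidity'`): if the homology with coefficients in `X` vanishes in all large
  degrees, then it vanishes in all degrees `i > dim Q - c`;
* Gulliksen's theorem (`CIData.sysArt`): if the homology is Artinian in each degree, it satisfies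
  the descending chain condition for graded submodules stable under the operators.

The latter shows that the common kernel of the operators is zero in large degrees, so that vanishing
in degree `n` implies vanishing in degree `n + 2` for all large `n` (`CIData.eventually_vanish'`). This
replaces the polynomial growth of lengths.

As `dim Q - c ≤ dim A`, rigidity applied over the local rings of `R` shows that a prime in the
support of one `Tor_i(M, N)` with `i > dim A` is in the support of infinitely many of them. Let
`p` be a prime of least height among those in infinitely many supports. Then `p` is minimal in
the support of each `Tor_i(M, N)`, `i > dim A`, whose support contains it, hence associated to it. At
a prime `q` of `R` minimal over `pR` these modules have finite length, so by the second statement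
`p` lies in the supports in all large degrees of one parity
(`exists_prime_forall_mem_associatedPrimes`). The set `{p}` is as required.
-/

open CategoryTheory

universe u

/-- A Noetherian local ring is regular if its maximal ideal is generated by
`dim Q` many elements. -/
def IsRegularLocal (Q : Type u) [CommRing Q] [IsLocalRing Q] [IsNoetherianRing Q] : Prop :=
  ∃ s : Finset Q, Ideal.span (s : Set Q) = IsLocalRing.maximalIdeal Q ∧
    (s.card : WithBot ℕ∞) = ringKrullDim Q

/-- A Noetherian local ring `A` is a complete intersection if its `m`-adic completion is
`Q/(f₁,…,f_c)` for a regular local ring `Q` and a `Q`-regular sequence `f₁,…,f_c`. -/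
def IsLocalCompleteIntersection (A : Type u) [CommRing A] [IsLocalRing A]
    [IsNoetherianRing A] : Prop :=
  ∃ (Q : Type u) (_ : CommRing Q) (_ : IsLocalRing Q) (_ : IsNoetherianRing Q),
    IsRegularLocal Q ∧
    ∃ rs : List Q, RingTheory.Sequence.IsRegular Q rs ∧
      Nonempty ((AdicCompletion (IsLocalRing.maximalIdeal A) A) ≃+*
        (Q ⧸ Ideal.span {x | x ∈ rs}))

/-! ### Lifts of complexes and Eisenbud operators -/

/-- The ideal `(f₀, …, f_{c-1})`. -/
def seqIdeal {Q : Type*} [CommRing Q] (f : ℕ → Q) (c : ℕ) : Ideal Q :=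
  Ideal.span (f '' Set.Iio c)

section seqIdeal
variable {Q : Type*} [CommRing Q] {f : ℕ → Q}

lemma seqIdeal_mono {a b : ℕ} (h : a ≤ b) : seqIdeal f a ≤ seqIdeal f b :=
  Ideal.span_mono (Set.image_mono (Set.Iio_subset_Iio h))

lemma mem_seqIdeal {a c : ℕ} (h : a < c) : f a ∈ seqIdeal f c :=
  Ideal.subset_span ⟨a, h, rfl⟩

lemma seqIdeal_zero : seqIdeal f 0 = ⊥ := by simp [seqIdeal]

lemma seqIdeal_succ (c : ℕ) : seqIdeal f (c + 1) = seqIdeal f c ⊔ Ideal.span {f c} := by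
  rw [seqIdeal, seqIdeal, ← Ideal.span_union]
  congr 1
  have : Set.Iio (c + 1) = insert c (Set.Iio c) := by
    ext x; simp only [Set.mem_Iio, Set.mem_insert_iff]; omega
  rw [this, Set.image_insert_eq, Set.insert_eq, Set.union_comm]

lemma mem_seqIdeal_iff {c : ℕ} {x : Q} :
    x ∈ seqIdeal f c ↔ ∃ a : ℕ → Q, x = ∑ k ∈ Finset.range c, f k * a k := by
  induction c generalizing x with
  | zero => simp [seqIdeal_zero]
  | succ c ih =>
    rw [seqIdeal_succ, Submodule.mem_sup]
    constructor
    · rintro ⟨y, hy, z, hz, rfl⟩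
      obtain ⟨a, ha⟩ := ih.1 hy
      obtain ⟨b, rfl⟩ := Ideal.mem_span_singleton.1 hz
      refine ⟨fun k => if k < c then a k else b, ?_⟩
      rw [Finset.sum_range_succ, ha]
      simp only [lt_irrefl, if_false]
      congr 1
      exact Finset.sum_congr rfl fun k hk => by simp [Finset.mem_range.1 hk]
    · rintro ⟨a, rfl⟩
      rw [Finset.sum_range_succ]
      exact ⟨_, ih.2 ⟨a, rfl⟩, _, Ideal.mem_span_singleton.2 (dvd_mul_right _ _), rfl⟩

/-- A matrix with entries in `(f₀, …, f_{c-1})` is a combination of the `f_k` with matrix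
coefficients. -/
lemma exists_matrix_sum {c : ℕ} {m n : Type*} (D : Matrix m n Q)
    (h : ∀ i j, D i j ∈ seqIdeal f c) :
    ∃ v : ℕ → Matrix m n Q, D = ∑ k ∈ Finset.range c, f k • v k := by
  choose a ha using fun i j => mem_seqIdeal_iff.1 (h i j)
  refine ⟨fun k => Matrix.of fun i j => a i j k, ?_⟩
  ext i j
  rw [Matrix.sum_apply, ha]
  rfl

end seqIdeal

/-- `f₀, …, f_{c-1}` is a weakly regular sequence on `Q`. -/
def WeakReg {Q : Type*} [CommRing Q] (f : ℕ → Q) (c : ℕ) : Prop :=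
  ∀ k < c, ∀ x, f k * x ∈ seqIdeal f k → x ∈ seqIdeal f k

/-- A lift to `Q` of a complex of finite free modules over `Q/(f₀, …, f_{c-1})`: a sequence of
matrices `d n : Q^(ι (n+1)) → Q^(ι n)` together with a chosen expression
`d n * d (n+1) = ∑ f_k • t k n`. Modulo the `f_k`, the matrices `t k` are the Eisenbud operators. -/
structure CIData {Q : Type u} [CommRing Q] (f : ℕ → Q) (c : ℕ) where
  ι : ℕ → Type
  [fin : ∀ n, Fintype (ι n)]
  [dec : ∀ n, DecidableEq (ι n)]
  d : ∀ n, Matrix (ι n) (ι (n + 1)) Q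
  t : ℕ → ∀ n, Matrix (ι n) (ι (n + 2)) Q
  hd : ∀ n, d n * d (n + 1) = ∑ k ∈ Finset.range c, f k • t k n

namespace CIData
attribute [instance] CIData.fin CIData.dec

variable {Q : Type u} [CommRing Q] {f : ℕ → Q} {c : ℕ}

/-- The sequence obtained by dropping the lowest `N` terms. -/
def shift (F : CIData f c) (N : ℕ) : CIData f c where
  ι n := F.ι (N + n)
  d n := F.d (N + n)
  t k n := F.t k (N + n)
  hd n := F.hd (N + n)

/-- Modulo `(f₀, …, f_{c-1})` the last operator `t_c` commutes with `d`: comparing the two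
evaluations of `d³` shows that `f_c • [d, t_c]` has entries in that ideal, and `f_c` is regular
modulo it. -/
lemma exists_v (hf : WeakReg f (c + 1)) (F : CIData f (c + 1)) (n : ℕ) :
    ∃ v : ℕ → Matrix (F.ι n) (F.ι (n + 3)) Q,
      F.d n * F.t c (n + 1) - F.t c n * F.d (n + 2) = ∑ k ∈ Finset.range c, f k • v k := by
  apply exists_matrix_sum
  intro i j
  apply hf c (Nat.lt_succ_self c)
  have h1 : F.d n * (F.d (n + 1) * F.d (n + 2)) = (F.d n * F.d (n + 1)) * F.d (n + 2) :=
    (Matrix.mul_assoc _ _ _).symm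
  rw [F.hd n, F.hd (n + 1), Finset.sum_range_succ, Finset.sum_range_succ, Matrix.mul_add,
    Matrix.add_mul, Matrix.mul_sum, Matrix.sum_mul] at h1
  simp only [Matrix.mul_smul, Matrix.smul_mul] at h1
  have h2 : f c • (F.d n * F.t c (n + 1) - F.t c n * F.d (n + 2)) =
      ∑ k ∈ Finset.range c, f k • (F.t k n * F.d (n + 2) - F.d n * F.t k (n + 1)) := by
    simp only [smul_sub, Finset.sum_sub_distrib]
    rw [sub_eq_sub_iff_add_eq_add]
    exact (add_comm _ _).trans h1
  have h3 := congrFun (congrFun h2 i) j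
  rw [Matrix.smul_apply, smul_eq_mul] at h3
  rw [h3, Matrix.sum_apply]
  refine Ideal.sum_mem _ fun k hk => ?_
  rw [Matrix.smul_apply, smul_eq_mul]
  exact Ideal.mul_mem_right _ _ (mem_seqIdeal (Finset.mem_range.1 hk))

/-- A chosen family of matrices with `[d, t_c] = ∑_{k < c} f_k • v_k`. -/
noncomputable def v (hf : WeakReg f (c + 1)) (F : CIData f (c + 1)) (k n : ℕ) :
    Matrix (F.ι n) (F.ι (n + 3)) Q := (F.exists_v hf n).choose k

lemma v_spec (hf : WeakReg f (c + 1)) (F : CIData f (c + 1)) (n : ℕ) :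
    F.d n * F.t c (n + 1) - F.t c n * F.d (n + 2) =
      ∑ k ∈ Finset.range c, f k • F.v hf k n := (F.exists_v hf n).choose_spec

/-- The lift of a complex over `Q/(f₀, …, f_c)` is turned into one over `Q/(f₀, …, f_{c-1})`:
the mapping cone of `t_c`, with multiplication by `f_c` as additional component. If `F` is exact
modulo `(f₀, …, f_c)`, this is exact modulo `(f₀, …, f_{c-1})` (`exactMod_cone`); it describes a
syzygy of the resolved module over the larger quotient. The terms are `F_{n+1} ⊕ F_n` for
`n ≥ 0`, so the bottom term `F₀` of the full cone is left out. -/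
noncomputable abbrev cone (hf : WeakReg f (c + 1)) (F : CIData f (c + 1)) : CIData f c where
  ι n := F.ι (n + 1) ⊕ F.ι n
  d n := Matrix.fromBlocks (F.d (n + 1)) (f c • 1) (- F.t c n) (- F.d n)
  t k n := Matrix.fromBlocks (F.t k (n + 1)) 0 (F.v hf k n) (F.t k n)
  hd n := by
    rw [Matrix.fromBlocks_multiply]
    have e : ∑ k ∈ Finset.range c, f k • Matrix.fromBlocks (F.t k (n + 1)) 0 (F.v hf k n) (F.t k n)
      = Matrix.fromBlocks (∑ k ∈ Finset.range c, f k • F.t k (n + 1)) 0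
        (∑ k ∈ Finset.range c, f k • F.v hf k n) (∑ k ∈ Finset.range c, f k • F.t k n) := by
      ext (i | i) (j | j) <;> simp [Matrix.sum_apply]
    rw [e]
    congr 1
    · have := F.hd (n + 1)
      rw [Finset.sum_range_succ] at this
      rw [this]; simp
    · simp
    · rw [← F.v_spec hf n]
      simp only [Matrix.neg_mul, Matrix.mul_neg, neg_neg]
      abel
    · have := F.hd n
      rw [Finset.sum_range_succ] at this
      simp only [Matrix.neg_mul, Matrix.mul_neg, neg_neg, this]
      simp

/-- Eisenbud operators are chain maps modulo `(f₀, …, f_{c-1})`. The case of `t_k` with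
`k < c - 1` is read off from the lower right block of the same identity for the cone. -/
lemma comm_d_t (hf : WeakReg f c) (F : CIData f c) (k : ℕ) (hk : k < c) (n : ℕ) (i j) :
    (F.d n * F.t k (n + 1) - F.t k n * F.d (n + 2)) i j ∈ seqIdeal f c := by
  induction c generalizing n with
  | zero => omega
  | succ c ih =>
    rcases Nat.lt_succ_iff_lt_or_eq.1 hk with h | rfl
    · have hf' : WeakReg f c := fun k hk => hf k (by omega)
      have := ih hf' (F.cone hf) h n (Sum.inr i) (Sum.inr j)
      have e : ((F.cone hf).d n * (F.cone hf).t k (n + 1) -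
          (F.cone hf).t k n * (F.cone hf).d (n + 2)) (Sum.inr i) (Sum.inr j) =
          - (F.d n * F.t k (n + 1) - F.t k n * F.d (n + 2)) i j - f c * F.v hf k n i j := by
        simp only [cone]
        rw [Matrix.fromBlocks_multiply, Matrix.fromBlocks_multiply, Matrix.sub_apply]
        simp
        ring
      rw [e] at this
      have h2 : f c * F.v hf k n i j ∈ seqIdeal f (c + 1) :=
        Ideal.mul_mem_right _ _ (mem_seqIdeal (Nat.lt_succ_self c))
      have h3 := add_mem (seqIdeal_mono (Nat.le_succ c) this) h2
      rw [sub_add_cancel] at h3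
      exact neg_mem_iff.1 h3
    · rw [F.v_spec hf n, Matrix.sum_apply]
      refine Ideal.sum_mem _ fun l hl => ?_
      rw [Matrix.smul_apply, smul_eq_mul]
      exact Ideal.mul_mem_right _ _ (mem_seqIdeal (by have := Finset.mem_range.1 hl; omega))

/-- The operators `t_k` and `t_c` commute up to the homotopy `v_k`: this is the lower left block
of the identity `comm_d_t` for the cone. -/
lemma comm_t_t (hf : WeakReg f (c + 1)) (F : CIData f (c + 1)) (k : ℕ) (hk : k < c) (n : ℕ)
    (i j) :
    (F.t k n * F.t c (n + 2) - F.t c n * F.t k (n + 2) -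
      (F.d n * F.v hf k (n + 1) + F.v hf k n * F.d (n + 3))) i j ∈ seqIdeal f c := by
  have hf' : WeakReg f c := fun k hk => hf k (by omega)
  have := comm_d_t hf' (F.cone hf) k hk n (Sum.inr i) (Sum.inl j)
  convert this using 1
  simp only [cone]
  rw [Matrix.fromBlocks_multiply, Matrix.fromBlocks_multiply, Matrix.sub_apply]
  simp
  ring

end CIData

/-- Exactness modulo `I` of the complex with differentials `d`, at the middle of `d n, d (n+1)`. -/
def ExactMod {Q : Type*} [CommRing Q] {ι : ℕ → Type} [∀ n, Fintype (ι n)]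
    (d : ∀ n, Matrix (ι n) (ι (n + 1)) Q) (I : Ideal Q) (n : ℕ) : Prop :=
  ∀ v : ι (n + 1) → Q, (∀ i, (d n).mulVec v i ∈ I) →
    ∃ w : ι (n + 2) → Q, ∀ i, v i - (d (n + 1)).mulVec w i ∈ I

namespace CIData
variable {Q : Type u} [CommRing Q] {f : ℕ → Q} {c : ℕ}

lemma exactMod_cone (hf : WeakReg f (c + 1)) (F : CIData f (c + 1)) (n : ℕ)
    (h : ExactMod F.d (seqIdeal f (c + 1)) (n + 1)) :
    ExactMod (F.cone hf).d (seqIdeal f c) n := by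
  intro x hx
  obtain ⟨a, b, rfl⟩ : ∃ a b, x = Sum.elim a b := ⟨x ∘ Sum.inl, x ∘ Sum.inr, by simp⟩
  have key : ∀ m (a : F.ι (m + 2) → Q) (b : F.ι (m + 1) → Q),
      ((F.cone hf).d m).mulVec (Sum.elim a b) =
      Sum.elim ((F.d (m + 1)).mulVec a + f c • b) (-(F.t c m).mulVec a - (F.d m).mulVec b) := by
    intro m a b
    simp only [cone]
    rw [Matrix.fromBlocks_mulVec]
    simp [Matrix.neg_mulVec, Matrix.smul_mulVec, sub_eq_add_neg]
  rw [key] at hx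
  have hx1 : ∀ i, (F.d (n + 1)).mulVec a i + f c * b i ∈ seqIdeal f c := fun i => hx (Sum.inl i)
  have hfc : f c ∈ seqIdeal f (c + 1) := mem_seqIdeal (Nat.lt_succ_self c)
  obtain ⟨a', ha'⟩ := h a fun i => by
    have := sub_mem (seqIdeal_mono (Nat.le_succ c) (hx1 i)) (Ideal.mul_mem_right (b i) _ hfc)
    simpa using this
  have hb' : ∀ i, ∃ b', a i - (F.d (n + 2)).mulVec a' i - f c * b' ∈ seqIdeal f c := by
    intro i
    have := ha' i
    rw [seqIdeal_succ, Submodule.mem_sup] at this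
    obtain ⟨y, hy, z, hz, hyz⟩ := this
    obtain ⟨b', rfl⟩ := Ideal.mem_span_singleton.1 hz
    exact ⟨b', by rw [← hyz]; simpa using hy⟩
  choose b' hb' using hb'
  refine ⟨Sum.elim a' b', ?_⟩
  rw [key]
  -- the difference is again a cycle modulo `I_c`, with first component in `I_c`
  have hcyc : ∀ i, ((F.cone hf).d n).mulVec (Sum.elim a b -
      ((F.cone hf).d (n + 1)).mulVec (Sum.elim a' b')) i ∈ seqIdeal f c := by
    intro i
    rw [Matrix.mulVec_sub, Matrix.mulVec_mulVec, (F.cone hf).hd, Pi.sub_apply]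
    refine sub_mem (by rw [key]; exact hx i) ?_
    rw [Matrix.mulVec, dotProduct]
    refine Ideal.sum_mem _ fun j _ => Ideal.mul_mem_right _ _ ?_
    rw [Matrix.sum_apply]
    refine Ideal.sum_mem _ fun l hl => ?_
    rw [Matrix.smul_apply, smul_eq_mul]
    exact Ideal.mul_mem_right _ _ (mem_seqIdeal (Finset.mem_range.1 hl))
  have hsub : Sum.elim a b - ((F.cone hf).d (n + 1)).mulVec (Sum.elim a' b') =
      Sum.elim (fun i => a i - (F.d (n + 2)).mulVec a' i - f c * b' i)
        (b - (-(F.t c (n + 1)).mulVec a' - (F.d (n + 1)).mulVec b')) := by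
    rw [key]
    ext (i | i)
    · simp [sub_sub]
    · simp
  rw [hsub, key] at hcyc
  rintro (i | i)
  · have := hb' i
    simpa [sub_sub] using this
  · have h1 := hcyc (Sum.inl i)
    simp only [Sum.elim_inl, Pi.add_apply, Pi.smul_apply, smul_eq_mul] at h1
    have h2 : (F.d (n + 1)).mulVec
        (fun i => a i - (F.d (n + 2)).mulVec a' i - f c * b' i) i ∈ seqIdeal f c := by
      rw [Matrix.mulVec, dotProduct]
      exact Ideal.sum_mem _ fun j _ => Ideal.mul_mem_left _ _ (hb' j)
    have h3 := hf c (Nat.lt_succ_self c) _ (by simpa using sub_mem h1 h2)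
    simpa using h3

end CIData

/-! ### Descending chains stable under operators of degree -2 -/

section act
variable {Q L : Type*} [CommRing Q] [CommRing L] (φ : Q →+* L) (X : Type*) [AddCommGroup X]
  [Module L X]
variable {l m n o : Type*} [Fintype n] [Fintype o]

/-- The action of a matrix over `Q` on vectors with entries in a module `X` over a `Q`-algebra. -/
def act (D : Matrix m n Q) : (n → X) →ₗ[L] (m → X) :=
  LinearMap.pi fun i => ∑ j, φ (D i j) • LinearMap.proj j

variable {X}

lemma act_apply (D : Matrix m n Q) (v : n → X) (i : m) :
    act φ X D v i = ∑ j, φ (D i j) • v j := by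
  simp [act, LinearMap.sum_apply]

lemma act_mul (D : Matrix m n Q) (E : Matrix n o Q) (v : o → X) :
    act φ X (D * E) v = act φ X D (act φ X E v) := by
  ext i
  simp only [act_apply, Matrix.mul_apply, map_sum, map_mul, Finset.sum_smul, Finset.smul_sum,
    mul_smul]
  exact Finset.sum_comm

lemma act_add (D E : Matrix m n Q) (v : n → X) :
    act φ X (D + E) v = act φ X D v + act φ X E v := by
  ext i; simp [act_apply, add_smul, Finset.sum_add_distrib]

lemma act_sub (D E : Matrix m n Q) (v : n → X) :
    act φ X (D - E) v = act φ X D v - act φ X E v := by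
  ext i; simp [act_apply, sub_smul, Finset.sum_sub_distrib]

lemma act_one [DecidableEq n] (v : n → X) : act φ X (1 : Matrix n n Q) v = v := by
  ext i
  rw [act_apply, Finset.sum_eq_single i] <;> simp +contextual [eq_comm]

lemma act_eq_zero {f : ℕ → Q} {c : ℕ} (hφ : ∀ k < c, φ (f k) = 0) {D : Matrix m n Q}
    (hD : ∀ i j, D i j ∈ seqIdeal f c) (v : n → X) : act φ X D v = 0 := by
  have h : seqIdeal f c ≤ RingHom.ker φ := Ideal.span_le.2 (by
    rintro _ ⟨k, hk, rfl⟩; exact hφ k hk)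
  ext i
  rw [act_apply]
  exact Finset.sum_eq_zero fun j _ => by
    rw [show φ (D i j) = 0 from h (hD i j), zero_smul]

lemma act_elim (D₁ : Matrix l n Q) (D₂ : Matrix l o Q) (D₃ : Matrix m n Q) (D₄ : Matrix m o Q)
    (a : n → X) (b : o → X) :
    act φ X (Matrix.fromBlocks D₁ D₂ D₃ D₄) (Sum.elim a b) =
      Sum.elim (act φ X D₁ a + act φ X D₂ b) (act φ X D₃ a + act φ X D₄ b) := by
  ext (i | i) <;> simp [act_apply]

lemma act_neg (D : Matrix m n Q) (v : n → X) : act φ X (-D) v = - act φ X D v := by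
  ext i; simp [act_apply]

lemma act_smul_zero {q : Q} (hq : φ q = 0) (D : Matrix m n Q) (v : n → X) :
    act φ X (q • D) v = 0 := by
  ext i; simp [act_apply, hq]

end act

/-- Every descending sequence of submodules between `B` and `Z` stabilises. -/
def SubArt {L C : Type*} [CommRing L] [AddCommGroup C] [Module L C] (B Z : Submodule L C) : Prop :=
  ∀ J : ℕ → Submodule L C, (∀ s, B ≤ J s) → (∀ s, J s ≤ Z) → Antitone J →
    ∃ s₀, ∀ s ≥ s₀, J s = J s₀

/-- Every descending sequence of graded submodules between `B` and `Z` which are stable under the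
operators `τ₀, …, τ_{c-1}` of degree `-2` stabilises (uniformly in the degree). -/
def SysArt {L : Type*} [CommRing L] {C : ℕ → Type*} [∀ n, AddCommGroup (C n)]
    [∀ n, Module L (C n)] (B Z : ∀ n, Submodule L (C n)) (τ : ℕ → ∀ n, C (n + 2) →ₗ[L] C n)
    (c : ℕ) : Prop :=
  ∀ J : ℕ → ∀ n, Submodule L (C n), (∀ s, B ≤ J s) → (∀ s, J s ≤ Z) → Antitone J →
    (∀ s, ∀ k < c, ∀ n, ∀ x ∈ J s (n + 2), τ k n x ∈ J s n) → ∃ s₀, ∀ s ≥ s₀, J s = J s₀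

/-- A doubly indexed family, decreasing in both indices, whose diagonal and whose columns
stabilise, is independent of the first index from some point on, uniformly in the second. -/
lemma double_stab {α : Type*} [PartialOrder α] (P : ℕ → ℕ → α)
    (h₁ : ∀ a, Antitone fun s => P s a) (h₂ : ∀ s, Antitone (P s))
    (hd : ∃ s₀, ∀ s ≥ s₀, P s s = P s₀ s₀) (hr : ∀ a, ∃ s₀, ∀ s ≥ s₀, P s a = P s₀ a) :
    ∃ s₀, ∀ s ≥ s₀, ∀ a, P s a = P s₀ a := by
  obtain ⟨m, hm⟩ := hd
  choose r hr using hr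
  have key : ∀ s ≥ m, ∀ a ≥ m, P s a = P m m := fun s hs a ha => by
    apply le_antisymm
    · exact (h₁ a hs).trans (h₂ m ha)
    · rw [← hm (max s a) (le_max_of_le_left hs)]
      exact (h₁ _ (le_max_left s a)).trans (h₂ s (le_max_right s a))
  refine ⟨m + ∑ a ∈ Finset.range m, r a, fun s hs a => ?_⟩
  rcases lt_or_ge a m with h | h
  · have h1 : r a ≤ ∑ a ∈ Finset.range m, r a :=
      Finset.single_le_sum (f := r) (fun _ _ => Nat.zero_le _) (Finset.mem_range.2 h)
    rw [hr a s (by omega), hr a (m + _) (by omega)]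
  · rw [key s (by omega) a h, key _ (by omega) a h]

section step
variable {L : Type*} [CommRing L] {C : ℕ → Type*} [∀ n, AddCommGroup (C n)]
    [∀ n, Module L (C n)] (B Z : ∀ n, Submodule L (C n)) (τ : ℕ → ∀ n, C (n + 2) →ₗ[L] C n)
    (c : ℕ)

/-- The inductive step of Gulliksen's theorem. The hypotheses describe, on the level of cycles `Z`
and boundaries `B`, a map `g : H(C')_n → H(C)_{n+2}` compatible with the first `c` operators and
whose image contains the kernel of the last operator `τ_c`; in the application `C'` is the
cone of `τ_c`. For a stable submodule `U`, the chain `U ⊇ τ_c U ⊇ τ_c² U ⊇ …` is the family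
`P s a = τ_c^a (J s)`, and `P s a` in degree `n + 2` is determined by its preimage under `g`
and by `P s (a + 1)` in degree `n`. So stabilisation upstairs and in the two lowest degrees implies
stabilisation everywhere. -/
lemma sysArt_step {C' : ℕ → Type*} [∀ n, AddCommGroup (C' n)]
    [∀ n, Module L (C' n)] (B' Z' : ∀ n, Submodule L (C' n))
    (τ' : ℕ → ∀ n, C' (n + 2) →ₗ[L] C' n) (g : ∀ n, C' n →ₗ[L] C (n + 2))
    (hBZ' : B' ≤ Z')
    (hgB : ∀ n, ∀ x ∈ B' n, g n x ∈ B (n + 2))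
    (hτZ' : ∀ k < c, ∀ n, ∀ x ∈ Z' (n + 2), τ' k n x ∈ Z' n)
    (hgτ : ∀ k < c, ∀ n x, g n (τ' k n x) = τ k (n + 2) (g (n + 2) x))
    (hlift : ∀ n, ∀ x ∈ Z (n + 2), τ c n x ∈ B n → ∃ z ∈ Z' n, x - g n z ∈ B (n + 2))
    (hτB : ∀ k ≤ c, ∀ n, ∀ x ∈ B (n + 2), τ k n x ∈ B n)
    (hcomm : ∀ k < c, ∀ n, ∀ x ∈ Z (n + 4), τ k n (τ c (n + 2) x) - τ c n (τ k (n + 2) x) ∈ B n)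
    (h0 : SubArt (B 0) (Z 0)) (h1 : SubArt (B 1) (Z 1))
    (hart : SysArt B' Z' τ' c) : SysArt B Z τ (c + 1) := by
  intro J hBJ hJZ hJ hst
  let Dop : (∀ n, Submodule L (C n)) → ∀ n, Submodule L (C n) :=
    fun U n => (U (n + 2)).map (τ c n) ⊔ B n
  have Dmono : Monotone Dop := fun U V h n => sup_le_sup_right (Submodule.map_mono (h _)) _
  let P : ℕ → ℕ → ∀ n, Submodule L (C n) := fun s a => Dop^[a] (J s)
  have Psucc : ∀ s a, P s (a + 1) = Dop (P s a) := fun s a => Function.iterate_succ_apply' _ _ _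
  have PB : ∀ s a, B ≤ P s a := fun s a => by
    cases a with
    | zero => exact hBJ s
    | succ a => rw [Psucc]; exact fun n => le_sup_right
  have hP : ∀ a s, P s a ≤ Z ∧
      (∀ k < c + 1, ∀ n, ∀ x ∈ P s a (n + 2), τ k n x ∈ P s a n) ∧ P s (a + 1) ≤ P s a := by
    have aux : ∀ U : ∀ n, Submodule L (C n), B ≤ U →
        (∀ k < c + 1, ∀ n, ∀ x ∈ U (n + 2), τ k n x ∈ U n) → Dop U ≤ U := by
      intro U hB hU n
      refine sup_le (Submodule.map_le_iff_le_comap.2 fun x hx => hU c (by omega) n x hx) (hB n)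
    intro a s
    suffices h : P s a ≤ Z ∧ (∀ k < c + 1, ∀ n, ∀ x ∈ P s a (n + 2), τ k n x ∈ P s a n) by
      refine ⟨h.1, h.2, ?_⟩
      rw [Psucc]
      exact aux _ (PB s a) h.2
    induction a with
    | zero => exact ⟨hJZ s, hst s⟩
    | succ a ih =>
      rw [Psucc]
      have hle := aux _ (PB s a) ih.2
      refine ⟨hle.trans ih.1, fun k hk n x hx => ?_⟩
      obtain ⟨_, ⟨y, hy, rfl⟩, b, hb, rfl⟩ := Submodule.mem_sup.1 hx
      rw [map_add]
      refine add_mem ?_ (Submodule.mem_sup_right (hτB k (by omega) n b hb))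
      rcases Nat.lt_succ_iff_lt_or_eq.1 hk with h | rfl
      · have h2 := hcomm k h n y (ih.1 _ hy)
        have h3 : τ c n (τ k (n + 2) y) ∈ Dop (P s a) n :=
          Submodule.mem_sup_left ⟨_, ih.2 k hk (n + 2) y hy, rfl⟩
        have := add_mem (Submodule.mem_sup_right h2 : _ ∈ Dop (P s a) n) h3
        rwa [sub_add_cancel] at this
      · exact Submodule.mem_sup_left ⟨_, ih.2 k hk _ y hy, rfl⟩
  have PZ : ∀ s a, P s a ≤ Z := fun s a => (hP a s).1
  have Pst : ∀ s a, ∀ k < c + 1, ∀ n, ∀ x ∈ P s a (n + 2), τ k n x ∈ P s a n :=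
    fun s a => (hP a s).2.1
  have Pa : ∀ s, Antitone (P s) := fun s => antitone_nat_of_succ_le fun a => (hP a s).2.2
  have Ps : ∀ a, Antitone fun s => P s a := fun a s s' h => Dmono.iterate a (hJ h)
  have Pd : Antitone fun s => P s s := fun s s' h => (Pa s' h).trans (Ps s h)
  -- the submodules of `Z'` lying over the `P s a`
  let K : ℕ → ℕ → ∀ n, Submodule L (C' n) := fun s a n => Z' n ⊓ (P s a (n + 2)).comap (g n)
  have Kmono : ∀ {s a s' a'}, P s a ≤ P s' a' → K s a ≤ K s' a' := fun h n =>
    inf_le_inf_left _ (Submodule.comap_mono (h _))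
  have KB : ∀ s a, B' ≤ K s a := fun s a n x hx => ⟨hBZ' n hx, PB s a _ (hgB n x hx)⟩
  have KZ : ∀ s a, K s a ≤ Z' := fun s a n => inf_le_left
  have Kst : ∀ s a, ∀ k < c, ∀ n, ∀ x ∈ K s a (n + 2), τ' k n x ∈ K s a n := by
    intro s a k hk n x hx
    refine ⟨hτZ' k hk n x hx.1, ?_⟩
    rw [SetLike.mem_coe, Submodule.mem_comap, hgτ k hk]
    exact Pst s a k (by omega) _ _ hx.2
  obtain ⟨s₁, hs₁⟩ := double_stab K (fun a s s' h => Kmono (Ps a h)) (fun s a a' h => Kmono (Pa s h))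
    (hart (fun s => K s s) (fun s => KB s s) (fun s => KZ s s) (fun s s' h => Kmono (Pd h))
      fun s => Kst s s)
    (fun a => hart (fun s => K s a) (fun s => KB s a) (fun s => KZ s a)
      (fun s s' h => Kmono (Ps a h)) fun s => Kst s a)
  have low : ∀ b, SubArt (B b) (Z b) → ∃ s₀, ∀ s ≥ s₀, ∀ a, P s a b = P s₀ a b := fun b hb =>
    double_stab (fun s a => P s a b) (fun a s s' h => Ps a h b) (fun s a a' h => Pa s h b)
      (hb (fun s => P s s b) (fun s => PB s s b) (fun s => PZ s s b) fun s s' h => Pd h b)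
      (fun a => hb (fun s => P s a b) (fun s => PB s a b) (fun s => PZ s a b)
        fun s s' h => Ps a h b)
  obtain ⟨s₂, hs₂⟩ := low 0 h0
  obtain ⟨s₃, hs₃⟩ := low 1 h1
  have key : ∀ n, ∀ s ≥ s₁ + s₂ + s₃, ∀ a, P s a n = P (s₁ + s₂ + s₃) a n := by
    intro n
    induction n using Nat.twoStepInduction with
    | zero => intro s hs a; rw [hs₂ s (by omega), hs₂ (s₁ + s₂ + s₃) (by omega)]
    | one => intro s hs a; rw [hs₃ s (by omega), hs₃ (s₁ + s₂ + s₃) (by omega)]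
    | more n ih _ =>
      intro s hs a
      refine le_antisymm (Ps a hs _) fun x hx => ?_
      have h4 : τ c n x ∈ P (s₁ + s₂ + s₃) (a + 1) n := by
        rw [Psucc]; exact Submodule.mem_sup_left ⟨x, hx, rfl⟩
      rw [← ih s hs, Psucc] at h4
      obtain ⟨_, ⟨y, hy, rfl⟩, b, hb, hxy⟩ := Submodule.mem_sup.1 h4
      obtain ⟨z, hz, hz'⟩ := hlift n (x - y) (sub_mem (PZ _ _ _ hx) (PZ _ _ _ hy)) (by
        rw [map_sub, ← hxy, add_sub_cancel_left]; exact hb)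
      have hgz : z ∈ K (s₁ + s₂ + s₃) a n := by
        refine ⟨hz, ?_⟩
        have := sub_mem (sub_mem hx (Ps a hs _ hy)) (PB (s₁ + s₂ + s₃) a _ hz')
        rwa [sub_sub_cancel] at this
      rw [hs₁ (s₁ + s₂ + s₃) (by omega), ← hs₁ s (by omega)] at hgz
      have := add_mem (add_mem (show g n z ∈ P s a (n + 2) from hgz.2) (PB s a _ hz')) hy
      rwa [add_sub_cancel, sub_add_cancel] at this
  exact ⟨s₁ + s₂ + s₃, fun s hs => funext fun n => key n s hs 0⟩

/-- In Artinian homology the common kernel of the operators vanishes in all large degrees, since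
its truncations form a descending sequence of stable submodules. Hence in large degrees `H_{n+2}`
embeds in a finite sum of copies of `H_n`. -/
lemma eventually_of_sysArt (hBZ : B ≤ Z)
    (hτB : ∀ k < c, ∀ n, ∀ x ∈ B (n + 2), τ k n x ∈ B n)
    (hτZ : ∀ k < c, ∀ n, ∀ x ∈ Z (n + 2), τ k n x ∈ Z n)
    (hart : SysArt B Z τ c) : ∃ n₀, ∀ n ≥ n₀, Z n ≤ B n → Z (n + 2) ≤ B (n + 2) := by
  let W : ∀ n, Submodule L (C n) := fun n => match n with
    | 0 => Z 0
    | 1 => Z 1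
    | n + 2 => Z (n + 2) ⊓ ⨅ k : Fin c, (B n).comap (τ k n)
  have WZ : W ≤ Z := fun n => match n with
    | 0 => le_rfl
    | 1 => le_rfl
    | n + 2 => inf_le_left
  have BW : B ≤ W := fun n => match n with
    | 0 => hBZ 0
    | 1 => hBZ 1
    | n + 2 => le_inf (hBZ _) (le_iInf fun k x hx => hτB k k.2 n x hx)
  obtain ⟨s₀, hs₀⟩ := hart (fun s n => if s ≤ n then W n else B n)
    (fun s n => by dsimp only; split_ifs; exacts [BW n, le_rfl])
    (fun s n => by dsimp only; split_ifs; exacts [WZ n, hBZ n])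
    (fun s s' h n => by
      dsimp only; split_ifs
      exacts [le_rfl, absurd h (by omega), BW n, le_rfl])
    (fun s k hk n x hx => by
      have : τ k n x ∈ B n := by
        split_ifs at hx
        · exact (Submodule.mem_iInf _).1 hx.2 ⟨k, hk⟩
        · exact hτB k hk n x hx
      split_ifs
      exacts [BW n this, this])
  have key : ∀ n ≥ s₀, W n = B n := fun n hn => by
    have := congrFun (hs₀ (n + 1) (by omega)) n
    simpa [hn] using this.symm
  refine ⟨s₀, fun n hn h => ?_⟩
  rw [← key (n + 2) (by omega)]
  exact le_inf le_rfl (le_iInf fun k x hx => h (hτZ k k.2 n x hx))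

end step

/-! ### Rigidity and Gulliksen's theorem -/

/-- Every exact sequence of free modules of finite rank over `Q` splits from degree `D` on. -/
def SplitsFrom (Q : Type*) [CommRing Q] (D : ℕ) : Prop :=
  ∀ (ι : ℕ → Type) [∀ n, Fintype (ι n)] [∀ n, DecidableEq (ι n)]
    (d : ∀ n, Matrix (ι n) (ι (n + 1)) Q), (∀ n, d n * d (n + 1) = 0) → (∀ n, ExactMod d ⊥ n) →
    ∀ n ≥ D, ∃ (s : Matrix (ι (n + 1)) (ι n) Q) (r : Matrix (ι (n + 2)) (ι (n + 1)) Q),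
      s * d n + d (n + 1) * r = 1

namespace CIData
section
variable {Q : Type u} {L X : Type*} [CommRing Q] [CommRing L] {f : ℕ → Q} {c : ℕ}
  [AddCommGroup X] [Module L X] (φ : Q →+* L)

/-- The cycles of the complex `X ⊗ F` over an algebra in which `f₀, …, f_{c-1}` vanish. -/
def Z (F : CIData f c) (X : Type*) [AddCommGroup X] [Module L X] (n : ℕ) :
    Submodule L (F.ι (n + 1) → X) := LinearMap.ker (act φ X (F.d n))

/-- The boundaries of the complex `X ⊗ F`. -/
def B (F : CIData f c) (X : Type*) [AddCommGroup X] [Module L X] (n : ℕ) :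
    Submodule L (F.ι (n + 1) → X) := LinearMap.range (act φ X (F.d (n + 1)))

/-- The operators of degree `-2` on `X ⊗ F`. -/
def τ (F : CIData f c) (X : Type*) [AddCommGroup X] [Module L X] (k n : ℕ) :
    (F.ι (n + 2 + 1) → X) →ₗ[L] (F.ι (n + 1) → X) := act φ X (F.t k (n + 1))

variable {φ}

lemma mem_Z {F : CIData f c} {n : ℕ} {x : F.ι (n + 1) → X} :
    x ∈ F.Z φ X n ↔ act φ X (F.d n) x = 0 := Iff.rfl

lemma mem_B {F : CIData f c} {n : ℕ} {x : F.ι (n + 1) → X} :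
    x ∈ F.B φ X n ↔ ∃ y, act φ X (F.d (n + 1)) y = x := Iff.rfl

lemma mem_Z_cone {hf : WeakReg f (c + 1)} {F : CIData f (c + 1)} (hφ : φ (f c) = 0) {n : ℕ}
    {a : F.ι (n + 2) → X} {b : F.ι (n + 1) → X} :
    (Sum.elim a b : (F.cone hf).ι (n + 1) → X) ∈ (F.cone hf).Z φ X n ↔
      act φ X (F.d (n + 1)) a = 0 ∧ act φ X (F.t c n) a + act φ X (F.d n) b = 0 := by
  rw [mem_Z, act_elim, act_smul_zero φ hφ, add_zero, act_neg, act_neg, ← neg_add]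
  constructor
  · intro h
    exact ⟨funext fun i => congrFun h (Sum.inl i),
      funext fun i => neg_eq_zero.1 (congrFun h (Sum.inr i))⟩
  · rintro ⟨h1, h2⟩
    rw [h1, h2]
    ext (i | i) <;> simp

lemma mem_B_cone {hf : WeakReg f (c + 1)} {F : CIData f (c + 1)} (hφ : φ (f c) = 0) {n : ℕ}
    {a : F.ι (n + 2) → X} {b : F.ι (n + 1) → X} :
    (Sum.elim a b : (F.cone hf).ι (n + 1) → X) ∈ (F.cone hf).B φ X n ↔
      ∃ a' b', act φ X (F.d (n + 2)) a' = a ∧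
        act φ X (F.t c (n + 1)) a' + act φ X (F.d (n + 1)) b' = - b := by
  rw [mem_B]
  have key : ∀ a' b', act φ X ((F.cone hf).d (n + 1)) (Sum.elim a' b') = Sum.elim a b ↔
      act φ X (F.d (n + 2)) a' = a ∧
        act φ X (F.t c (n + 1)) a' + act φ X (F.d (n + 1)) b' = - b := by
    intro a' b'
    rw [act_elim, act_smul_zero φ hφ, add_zero, act_neg, act_neg, ← neg_add, Sum.elim_eq_iff,
      neg_eq_iff_eq_neg]
  constructor
  · rintro ⟨y, hy⟩
    refine ⟨y ∘ Sum.inl, y ∘ Sum.inr, (key _ _).1 ?_⟩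
    rw [← hy, Sum.elim_comp_inl_inr]
  · rintro ⟨a', b', h⟩
    exact ⟨_, (key _ _).2 h⟩

lemma B_le_Z (hφ : ∀ k < c, φ (f k) = 0) (F : CIData f c) (n : ℕ) : F.B φ X n ≤ F.Z φ X n := by
  rintro _ ⟨y, rfl⟩
  rw [mem_Z, ← act_mul]
  refine act_eq_zero φ hφ (fun i j => ?_) y
  rw [F.hd, Matrix.sum_apply]
  refine Ideal.sum_mem _ fun l hl => ?_
  rw [Matrix.smul_apply, smul_eq_mul]
  exact Ideal.mul_mem_right _ _ (mem_seqIdeal (Finset.mem_range.1 hl))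

lemma act_comm_d_t (hf : WeakReg f c) (hφ : ∀ k < c, φ (f k) = 0) (F : CIData f c) (k : ℕ)
    (hk : k < c) (n : ℕ) (x : F.ι (n + 3) → X) :
    act φ X (F.d n) (act φ X (F.t k (n + 1)) x) = act φ X (F.t k n) (act φ X (F.d (n + 2)) x) := by
  have := act_eq_zero φ hφ (F.comm_d_t hf k hk n) x
  rw [act_sub, act_mul, act_mul, sub_eq_zero] at this
  exact this

lemma τ_mem_Z (hf : WeakReg f c) (hφ : ∀ k < c, φ (f k) = 0) (F : CIData f c) (k : ℕ)
    (hk : k < c) (n : ℕ) (x) (hx : x ∈ F.Z φ X (n + 2)) : F.τ φ X k n x ∈ F.Z φ X n := by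
  rw [mem_Z] at hx ⊢
  rw [τ, act_comm_d_t hf hφ F k hk, hx, map_zero]

lemma τ_mem_B (hf : WeakReg f c) (hφ : ∀ k < c, φ (f k) = 0) (F : CIData f c) (k : ℕ)
    (hk : k < c) (n : ℕ) (x) (hx : x ∈ F.B φ X (n + 2)) : F.τ φ X k n x ∈ F.B φ X n := by
  obtain ⟨y, rfl⟩ := hx
  exact ⟨act φ X (F.t k (n + 2)) y, act_comm_d_t hf hφ F k hk (n + 1) y⟩

/-- A split exact complex remains exact after any change of coefficients. -/
lemma Z_le_B_of_splits {Q L X : Type*} [CommRing Q] [CommRing L]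
    [AddCommGroup X] [Module L X] (φ : Q →+* L) {D : ℕ} (hQ : SplitsFrom Q D)
    (ι : ℕ → Type) [∀ n, Fintype (ι n)] [∀ n, DecidableEq (ι n)]
    (d : ∀ n, Matrix (ι n) (ι (n + 1)) Q) (hd : ∀ n, d n * d (n + 1) = 0)
    (he : ∀ n, ExactMod d ⊥ n) {n : ℕ} (hn : D ≤ n) :
    LinearMap.ker (act φ X (d n)) ≤ LinearMap.range (act φ X (d (n + 1))) := by
  obtain ⟨s, r, h⟩ := hQ ι d hd he n hn
  intro x hx
  refine ⟨act φ X r x, ?_⟩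
  have := act_one φ x
  rw [← h, act_add, act_mul, act_mul, LinearMap.mem_ker.1 hx, map_zero, zero_add] at this
  exact this

lemma zero_Z_le_B {D : ℕ} (hQ : SplitsFrom Q D) (F : CIData f 0)
    (he : ∀ n, ExactMod F.d (seqIdeal f 0) n) {n : ℕ} (hn : D ≤ n) :
    F.Z φ X n ≤ F.B φ X n := by
  refine Z_le_B_of_splits φ hQ F.ι F.d (fun n => by simpa using F.hd n) ?_ hn
  rwa [seqIdeal_zero] at he

/-- Rigidity: if the homology of `X ⊗ F` vanishes in all large degrees, it vanishes from degree
`D` on. -/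
lemma rigidity {D : ℕ} (hQ : SplitsFrom Q D) (hf : WeakReg f c) (hφ : ∀ k < c, φ (f k) = 0)
    (F : CIData f c) (he : ∀ n ≥ c, ExactMod F.d (seqIdeal f c) n)
    (n₀ : ℕ) (h : ∀ n ≥ n₀, F.Z φ X n ≤ F.B φ X n) : ∀ n ≥ D, F.Z φ X n ≤ F.B φ X n := by
  induction c with
  | zero => exact fun n hn => zero_Z_le_B hQ F (fun n => he n (Nat.zero_le _)) hn
  | succ c ih =>
    have hf' : WeakReg f c := fun k hk => hf k (by omega)
    have hφc : φ (f c) = 0 := hφ c (by omega)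
    have hG := ih hf' (fun k hk => hφ k (by omega)) (F.cone hf)
      (fun n hn => F.exactMod_cone hf n (he (n + 1) (by omega))) (by
        intro n hn x hx
        obtain ⟨a, b, rfl⟩ : ∃ a b, x = Sum.elim a b :=
          ⟨x ∘ Sum.inl, x ∘ Sum.inr, (Sum.elim_comp_inl_inr x).symm⟩
        obtain ⟨h1, h2⟩ := (mem_Z_cone hφc).1 hx
        obtain ⟨a', rfl⟩ := h (n + 1) (by omega) h1
        rw [← act_comm_d_t hf hφ F c (by omega), ← map_add] at h2
        obtain ⟨b', hb'⟩ := h n hn h2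
        exact (mem_B_cone hφc).2 ⟨a', -b', rfl, by rw [map_neg, hb']; abel⟩)
    have step : ∀ n ≥ D, F.Z φ X (n + 2) ≤ F.B φ X (n + 2) → F.Z φ X n ≤ F.B φ X n := by
      intro n hn h2 z hz
      obtain ⟨a, b, ha, hab⟩ := (mem_B_cone (b := z) hφc).1 (hG n hn ((mem_Z_cone (a := 0)
        (b := z) hφc).2 ⟨map_zero _, by rw [map_zero, zero_add]; exact hz⟩))
      obtain ⟨a', rfl⟩ := h2 ha
      rw [← act_comm_d_t hf hφ F c (by omega) (n + 1), ← map_add] at hab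
      exact ⟨-(act φ X (F.t c (n + 1 + 1)) a' + b), by
        rw [map_neg]; exact neg_eq_iff_eq_neg.2 hab⟩
    have down : ∀ j, ∀ n ≥ D, n + 2 * j ≥ n₀ → F.Z φ X n ≤ F.B φ X n := by
      intro j
      induction j with
      | zero => exact fun n _ hn => h n (by omega)
      | succ j ihj => exact fun n hn hj => step n hn (ihj (n + 2) (by omega) (by omega))
    exact fun n hn => down n₀ n hn (by omega)

/-- The degreewise chain condition passes to the cone, whose homology is an extension of a
submodule of `H_{n+1}` by a quotient of `H_n`. -/
lemma subArt_cone (hf : WeakReg f (c + 1)) (hφ : φ (f c) = 0)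
    (F : CIData f (c + 1)) (h : ∀ n, SubArt (F.B φ X n) (F.Z φ X n)) (n : ℕ) :
    SubArt ((F.cone hf).B φ X n) ((F.cone hf).Z φ X n) := by
  intro J hB hZ hJ
  let p₁ : ((F.cone hf).ι (n + 1) → X) →ₗ[L] (F.ι (n + 2) → X) := LinearMap.funLeft L X Sum.inl
  let i₂ : (F.ι (n + 1) → X) →ₗ[L] ((F.cone hf).ι (n + 1) → X) :=
    (LinearMap.pi (Sum.elim (fun _ => 0) fun i => LinearMap.proj i))
  have hi₂ : ∀ b, i₂ b = Sum.elim (0 : F.ι (n + 2) → X) b := fun b => by ext (i | i) <;> simp [i₂]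
  obtain ⟨s₁, hs₁⟩ := h (n + 1) (fun s => (J s).map p₁)
    (by
      rintro s _ ⟨y, rfl⟩
      refine ⟨Sum.elim (act φ X (F.d (n + 2)) y) (-act φ X (F.t c (n + 1)) y), hB s ?_, rfl⟩
      exact (mem_B_cone hφ).2 ⟨y, 0, rfl, by simp⟩)
    (by
      rintro s _ ⟨x, hx, rfl⟩
      obtain ⟨a, b, rfl⟩ : ∃ a b, x = Sum.elim a b :=
          ⟨x ∘ Sum.inl, x ∘ Sum.inr, (Sum.elim_comp_inl_inr x).symm⟩
      exact ((mem_Z_cone hφ).1 (hZ s hx)).1)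
    (fun s s' hs => Submodule.map_mono (hJ hs))
  obtain ⟨s₂, hs₂⟩ := h n (fun s => (J s).comap i₂)
    (by
      rintro s _ ⟨y, rfl⟩
      rw [Submodule.mem_comap, hi₂]
      exact hB s ((mem_B_cone hφ).2 ⟨0, -y, map_zero _, by simp⟩))
    (by
      intro s b hb
      rw [Submodule.mem_comap, hi₂] at hb
      have := ((mem_Z_cone hφ).1 (hZ s hb)).2
      rwa [map_zero, zero_add] at this)
    (fun s s' hs => Submodule.comap_mono (hJ hs))
  refine ⟨s₁ + s₂, fun s hs => le_antisymm (hJ hs) fun x hx => ?_⟩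
  have h1 : p₁ x ∈ (J s).map p₁ := by
    have e1 := hs₁ s (by omega)
    have e2 := hs₁ (s₁ + s₂) (by omega)
    dsimp only at e1 e2
    rw [e1, ← e2]
    exact ⟨x, hx, rfl⟩
  obtain ⟨y, hy, hxy⟩ := h1
  have h2 : i₂ (fun i => x (Sum.inr i) - y (Sum.inr i)) = x - y := by
    rw [hi₂]
    ext (i | i)
    · have := congrFun hxy i
      simp only [Sum.elim_inl, Pi.zero_apply, Pi.sub_apply]
      rw [eq_comm, sub_eq_zero]
      exact this.symm
    · simp
  have h3 : (fun i => x (Sum.inr i) - y (Sum.inr i)) ∈ (J s).comap i₂ := by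
    have e1 := hs₂ s (by omega)
    have e2 := hs₂ (s₁ + s₂) (by omega)
    dsimp only at e1 e2
    rw [e1, ← e2, Submodule.mem_comap, h2]
    exact sub_mem hx (hJ hs hy)
  rw [Submodule.mem_comap, h2] at h3
  have := add_mem h3 hy
  rwa [sub_add_cancel] at this

/-- The sequence obtained by dropping the lowest term. -/
abbrev tail (F : CIData f c) : CIData f c where
  ι n := F.ι (n + 1)
  d n := F.d (n + 1)
  t k n := F.t k (n + 1)
  hd n := F.hd (n + 1)

/-- Gulliksen's theorem, in the form: descending sequences of operator-stable graded submodules of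
the homology of `X ⊗ F` stabilise, as soon as they do so in each single degree. -/
lemma sysArt {D : ℕ} (hQ : SplitsFrom Q D) (hf : WeakReg f c) (hφ : ∀ k < c, φ (f k) = 0)
    (F : CIData f c) (he : ∀ n, ExactMod F.d (seqIdeal f c) n)
    (hs : ∀ n, SubArt (F.B φ X n) (F.Z φ X n)) :
    SysArt (F.B φ X) (F.Z φ X) (F.τ φ X) c := by
  induction c with
  | zero =>
    intro J hB hZ hJ _
    have h1 : ∀ n, ∃ s₀, ∀ s ≥ s₀, J s n = J s₀ n := fun n =>
      hs n (fun s => J s n) (fun s => hB s n) (fun s => hZ s n) fun s s' h => hJ h n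
    choose r hr using h1
    refine ⟨∑ n ∈ Finset.range D, r n, fun s hs => funext fun n => ?_⟩
    rcases lt_or_ge n D with h | h
    · have h1 : r n ≤ ∑ a ∈ Finset.range D, r a :=
        Finset.single_le_sum (f := r) (fun _ _ => Nat.zero_le _) (Finset.mem_range.2 h)
      rw [hr n s (by omega), hr n (∑ n ∈ Finset.range D, r n) h1]
    · have h2 : ∀ s, J s n = F.B φ X n := fun s =>
        le_antisymm ((hZ s n).trans (zero_Z_le_B hQ F he h)) (hB s n)
      rw [h2, h2]
  | succ c ih =>
    have hf' : WeakReg f c := fun k hk => hf k (by omega)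
    have hφ' : ∀ k < c, φ (f k) = 0 := fun k hk => hφ k (by omega)
    have hφc : φ (f c) = 0 := hφ c (by omega)
    have elim : ∀ n (x : ((tail F).cone hf).ι (n + 1) → X), ∃ a b, x = Sum.elim a b :=
      fun n x => ⟨x ∘ Sum.inl, x ∘ Sum.inr, (Sum.elim_comp_inl_inr x).symm⟩
    refine sysArt_step (F.B φ X) (F.Z φ X) (F.τ φ X) c (((tail F).cone hf).B φ X)
      (((tail F).cone hf).Z φ X) (((tail F).cone hf).τ φ X)
      (fun n => LinearMap.funLeft L X Sum.inl)
      (B_le_Z hφ' _) ?_ (fun k hk => τ_mem_Z hf' hφ' _ k hk) ?_ ?_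
      (fun k hk => τ_mem_B hf hφ F k (by omega)) ?_ (hs 0) (hs 1)
      (ih hf' hφ' _ (fun n => (tail F).exactMod_cone hf n (he (n + 2)))
        (subArt_cone hf hφc _ fun n => hs (n + 1)))
    · intro n x hx
      obtain ⟨a, b, rfl⟩ := elim n x
      obtain ⟨a', -, h, -⟩ := (mem_B_cone hφc).1 hx
      exact ⟨a', h⟩
    · intro k hk n x
      obtain ⟨a, b, rfl⟩ := elim (n + 2) x
      rw [τ, act_elim]
      ext i
      simp [LinearMap.funLeft, act_apply, τ]
    · rintro n x hx ⟨b, hb⟩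
      refine ⟨Sum.elim x (-b), (mem_Z_cone hφc).2 ⟨hx, ?_⟩, ?_⟩
      · rw [map_neg, hb]; exact add_neg_cancel _
      · have h0 : x - LinearMap.funLeft L X Sum.inl (Sum.elim x (-b)) = 0 := sub_eq_zero.2 rfl
        exact h0 ▸ zero_mem _
    · intro k hk n x hx
      have h := act_eq_zero φ hφ' (F.comm_t_t hf k hk (n + 1)) x
      rw [act_sub, act_sub, act_add, act_mul, act_mul, act_mul, act_mul, mem_Z.1 hx, map_zero,
        add_zero, sub_eq_zero] at h
      exact ⟨_, h.symm⟩

/-- If the homology of `X ⊗ F` satisfies the descending chain condition in each degree, then, for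
large `n`, vanishing in degree `n` implies vanishing in degree `n + 2`. -/
lemma eventually_vanish {D : ℕ} (hQ : SplitsFrom Q D) (hf : WeakReg f c)
    (hφ : ∀ k < c, φ (f k) = 0) (F : CIData f c) (he : ∀ n ≥ c, ExactMod F.d (seqIdeal f c) n)
    (hs : ∀ n ≥ D, SubArt (F.B φ X n) (F.Z φ X n)) :
    ∃ n₀, ∀ n ≥ n₀, F.Z φ X n ≤ F.B φ X n → F.Z φ X (n + 2) ≤ F.B φ X (n + 2) := by
  obtain ⟨n₀, h⟩ := eventually_of_sysArt ((F.shift (D + c)).B φ X) ((F.shift (D + c)).Z φ X)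
    ((F.shift (D + c)).τ φ X) c (B_le_Z hφ _) (τ_mem_B hf hφ _) (τ_mem_Z hf hφ _)
    (sysArt hQ hf hφ _ (fun n => he (D + c + n) (by omega)) fun n => hs (D + c + n) (by omega))
  refine ⟨D + c + n₀, fun n hn => ?_⟩
  obtain ⟨m, rfl⟩ := Nat.exists_eq_add_of_le (show D + c ≤ n by omega)
  exact h m (by omega)

end
end CIData

/-! ### Exact sequences over regular local rings -/

section regular
open IsLocalRing

lemma ringKrullDim_le_card {Q : Type*} [CommRing Q] [IsLocalRing Q] [IsNoetherianRing Q]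
    (s : Finset Q) (hs : Ideal.span (s : Set Q) = maximalIdeal Q) :
    ringKrullDim Q ≤ s.card := by
  refine (ringKrullDim_le_spanFinrank_maximalIdeal Q).trans ?_
  rw [← hs]
  have := Submodule.spanFinrank_span_le_ncard_of_finite (R := Q) s.finite_toSet
  exact_mod_cast this

lemma map_mk_maximalIdeal {Q : Type*} [CommRing Q] [IsLocalRing Q] (I : Ideal Q)
    [IsLocalRing (Q ⧸ I)] :
    (maximalIdeal Q).map (Ideal.Quotient.mk I) = maximalIdeal (Q ⧸ I) := by
  have : IsLocalHom (Ideal.Quotient.mk I) :=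
    IsLocalHom.of_surjective _ Ideal.Quotient.mk_surjective
  rw [← maximalIdeal_comap (Ideal.Quotient.mk I),
    Ideal.map_comap_of_surjective _ Ideal.Quotient.mk_surjective]

lemma exists_prime_le_dim_quotient {Q : Type*} [CommRing Q] {D : ℕ} (h : D ≤ ringKrullDim Q) :
    ∃ p : Ideal Q, p.IsPrime ∧ D ≤ ringKrullDim (Q ⧸ p) := by
  obtain ⟨l, hl⟩ := Order.le_krullDim_iff.1 h
  refine ⟨l.head.asIdeal, l.head.2, ?_⟩
  have e : PrimeSpectrum.zeroLocus (l.head.asIdeal : Set Q) = Set.Ici l.head := by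
    ext q; rfl
  rw [ringKrullDim_quotient, e]
  have h1 := Order.coheight_eq_krullDim_Ici l.head
  have h2 : (l.length : ℕ∞) ≤ Order.coheight l.head := Order.length_le_coheight_head
  rw [← h1, ← hl]
  exact_mod_cast h2

lemma mulVec_map {Q R m n : Type*} [CommRing Q] [CommRing R] [Fintype n] (g : Q →+* R)
    (D : Matrix m n Q) (v : n → Q) (i : m) :
    (D.map g).mulVec (fun j => g (v j)) i = g (D.mulVec v i) := by
  simp [Matrix.mulVec, dotProduct]

lemma dim_le_quotient_singleton {Q : Type*} [CommRing Q] [IsLocalRing Q] [IsNoetherianRing Q]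
    {x : Q} (hx : x ∈ maximalIdeal Q) :
    ringKrullDim Q ≤ ringKrullDim (Q ⧸ Ideal.span {x}) + 1 := by
  have := ringKrullDim_le_ringKrullDim_quotient_add_card {x}
    (by rwa [Finset.coe_singleton, Set.singleton_subset_iff, SetLike.mem_coe,
      ringJacobson_eq_maximalIdeal])
  rwa [Finset.coe_singleton, Finset.card_singleton, Nat.cast_one] at this

lemma le_of_succ_le_add_one {D : ℕ} {d : WithBot ℕ∞} (h : ((D + 1 : ℕ) : WithBot ℕ∞) ≤ d + 1) :
    (D : WithBot ℕ∞) ≤ d := by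
  induction d using WithBot.recBotCoe with
  | bot => simp at h
  | coe d =>
    induction d using ENat.recTopCoe with
    | top => exact le_top
    | coe d => norm_cast at h ⊢; omega

/-- A Noetherian local ring whose maximal ideal has `D ≤ dim Q` generators is a domain, and exact
sequences of free modules over it stay exact modulo the maximal ideal from degree `D` on. Both parts go by induction on `D`,
dividing by one of the generators `x`: a prime with `dim Q/p = dim Q` must be zero because it
lies in `x Q` and hence equals `x p`, and an exact sequence over `Q`, read modulo `x`,
stays exact except at its lowest place. -/
lemma regular_aux (D : ℕ) : ∀ (Q : Type u) [CommRing Q] [IsLocalRing Q] [IsNoetherianRing Q]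
    (s : Finset Q), Ideal.span (s : Set Q) = maximalIdeal Q → s.card ≤ D →
    (D : WithBot ℕ∞) ≤ ringKrullDim Q →
    IsDomain Q ∧ ∀ (ι : ℕ → Type) [∀ n, Fintype (ι n)]
    (d : ∀ n, Matrix (ι n) (ι (n + 1)) Q), (∀ n, d n * d (n + 1) = 0) →
    (∀ n, ExactMod d ⊥ n) → ∀ n ≥ D, ExactMod d (maximalIdeal Q) n := by
  induction D with
  | zero =>
    intro Q _ _ _ s hs hc _
    have h0 : maximalIdeal Q = ⊥ := by
      rw [← hs, Finset.card_eq_zero.1 (Nat.le_zero.1 hc)]; simp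
    refine ⟨(isField_iff_maximalIdeal_eq.2 h0).isDomain, ?_⟩
    intro ι _ d _ h n _
    rw [h0]; exact h n
  | succ D ih =>
    intro Q _ _ _ s hs hc hD
    classical
    obtain ⟨x, hx⟩ : s.Nonempty := by
      by_contra h0
      rw [Finset.not_nonempty_iff_eq_empty] at h0
      have := hD.trans (ringKrullDim_le_card s hs)
      rw [h0] at this
      norm_cast at this
    have hxm : x ∈ maximalIdeal Q := hs ▸ Ideal.subset_span hx
    have hI : Ideal.span {x} ≤ maximalIdeal Q := (Ideal.span_singleton_le_iff_mem _).2 hxm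
    have hIt : Ideal.span {x} ≠ ⊤ := fun h => (maximalIdeal.isMaximal Q).ne_top (top_le_iff.1 (h ▸ hI))
    have : Nontrivial (Q ⧸ Ideal.span {x}) := Ideal.Quotient.nontrivial_iff.2 hIt
    have : IsLocalRing (Q ⧸ Ideal.span {x}) :=
      IsLocalRing.of_surjective' _ Ideal.Quotient.mk_surjective
    let π := Ideal.Quotient.mk (Ideal.span {x})
    have hπ : ∀ a, π a = 0 ↔ x ∣ a := fun a => by
      rw [Ideal.Quotient.eq_zero_iff_mem, Ideal.mem_span_singleton]
    have hs' : Ideal.span (((s.erase x).image π : Finset _) : Set (Q ⧸ Ideal.span {x})) =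
        maximalIdeal _ := by
      rw [← map_mk_maximalIdeal, ← hs, Ideal.map_span]
      conv_rhs => rw [← Finset.insert_erase hx]
      rw [Finset.coe_insert, Set.image_insert_eq, (hπ x).2 dvd_rfl, Ideal.span_insert_zero,
        Finset.coe_image]
    have hc' : ((s.erase x).image π).card ≤ D := by
      refine Finset.card_image_le.trans ?_
      rw [Finset.card_erase_of_mem hx]; omega
    have hD' : (D : WithBot ℕ∞) ≤ ringKrullDim (Q ⧸ Ideal.span {x}) := by
      exact le_of_succ_le_add_one (hD.trans (dim_le_quotient_singleton hxm))
    obtain ⟨hdom, hex⟩ := ih (Q ⧸ Ideal.span {x}) _ hs' hc' hD'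
    have hDbar : ringKrullDim (Q ⧸ Ideal.span {x}) ≤ D :=
      (ringKrullDim_le_card _ hs').trans (by exact_mod_cast hc')
    obtain ⟨p, hp, hpD⟩ := exists_prime_le_dim_quotient hD
    have hlt : ¬ ((D + 1 : ℕ) : WithBot ℕ∞) ≤ D := by norm_cast; omega
    have hxp : x ∉ p := by
      intro hxp
      apply hlt
      refine hpD.trans (le_trans ?_ hDbar)
      exact ringKrullDim_le_of_surjective (Ideal.Quotient.factor
        ((Ideal.span_singleton_le_iff_mem _).2 hxp)) (Ideal.Quotient.factor_surjective _)
    -- `Q/x` is a domain of dimension `D`, so a nonzero `y ∈ p` modulo `x` would force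
    -- `dim Q/(p, x) < D`, against `dim Q/p ≥ D + 1`
    have hpx : ∀ a ∈ p, x ∣ a := by
      intro y hy
      by_contra hxy
      apply hlt
      have hy0 : π y ≠ 0 := fun h => hxy ((hπ y).1 h)
      have h1 := ringKrullDim_quotient_succ_le_of_nonZeroDivisor (mem_nonZeroDivisors_of_ne_zero hy0)
      have h2 : ringKrullDim (Q ⧸ p) ≤ ringKrullDim ((Q ⧸ p) ⧸ Ideal.span {Ideal.Quotient.mk p x}) + 1 := by
        have : IsLocalRing (Q ⧸ p) := IsLocalRing.of_surjective' _ Ideal.Quotient.mk_surjective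
        refine dim_le_quotient_singleton ?_
        rw [← map_mk_maximalIdeal]
        exact Ideal.mem_map_of_mem _ hxm
      have h3 : ringKrullDim ((Q ⧸ p) ⧸ Ideal.span {Ideal.Quotient.mk p x}) ≤
          ringKrullDim ((Q ⧸ Ideal.span {x}) ⧸ Ideal.span {π y}) := by
        let g : Q →+* ((Q ⧸ p) ⧸ Ideal.span {Ideal.Quotient.mk p x}) :=
          (Ideal.Quotient.mk _).comp (Ideal.Quotient.mk p)
        have hgx : g x = 0 := Ideal.Quotient.eq_zero_iff_mem.2 (Ideal.mem_span_singleton_self _)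
        have hgy : g y = 0 := by
          simp [g, Ideal.Quotient.eq_zero_iff_mem.2 hy]
        let g₁ : (Q ⧸ Ideal.span {x}) →+* _ := Ideal.Quotient.lift _ g fun a ha => by
          obtain ⟨b, rfl⟩ := Ideal.mem_span_singleton.1 ha
          rw [map_mul, hgx, zero_mul]
        refine ringKrullDim_le_of_surjective (Ideal.Quotient.lift _ g₁ fun a ha => by
          obtain ⟨b, rfl⟩ := Ideal.mem_span_singleton.1 ha
          rw [map_mul, show g₁ (π y) = 0 from hgy, zero_mul]) ?_
        refine Ideal.Quotient.lift_surjective_of_surjective _ _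
          (Ideal.Quotient.lift_surjective_of_surjective _ _ ?_)
        exact Ideal.Quotient.mk_surjective.comp Ideal.Quotient.mk_surjective
      refine hpD.trans (h2.trans ?_)
      refine le_trans ?_ (h1.trans hDbar)
      gcongr
    -- now `p = x p`, and Nakayama's lemma applies
    have hp0 : p = ⊥ := by
      refine Submodule.eq_bot_of_le_smul_of_le_jacobson_bot (Ideal.span {x}) p
        (IsNoetherian.noetherian p) ?_ (by
          rw [IsLocalRing.jacobson_eq_maximalIdeal ⊥ bot_ne_top]; exact hI)
      intro a ha
      obtain ⟨b, rfl⟩ := hpx a ha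
      exact Submodule.smul_mem_smul (Ideal.mem_span_singleton_self x)
        ((hp.mem_or_mem ha).resolve_left hxp)
    have hQ : IsDomain Q := by
      have : NoZeroDivisors Q := ⟨fun {a b} hab => by
        rw [hp0] at hp
        simpa using hp.mem_or_mem (show a * b ∈ (⊥ : Ideal Q) from hab)⟩
      exact NoZeroDivisors.to_isDomain Q
    refine ⟨hQ, ?_⟩
    have hx0 : x ≠ 0 := fun h => hxp (h ▸ zero_mem p)
    intro ι _ d hd h n hn
    obtain ⟨n, rfl⟩ : ∃ m, n = m + 1 := ⟨n - 1, by omega⟩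
    have hbar := hex (fun n => ι (n + 1)) (fun n => (d (n + 1)).map π) (fun m => by
      rw [← Matrix.map_mul, hd]; simp) (by
      intro m v hv
      choose w hw using fun i => Ideal.Quotient.mk_surjective (v i)
      obtain rfl : (fun i => π (w i)) = v := funext hw
      simp only [mulVec_map, Ideal.mem_bot, hπ] at hv
      choose z hz using hv
      have hz' : (d (m + 1)).mulVec w = x • z := funext hz
      have hdz : ∀ i, (d m).mulVec z i ∈ (⊥ : Ideal Q) := fun i => by
        have h1 : x • (d m).mulVec z = 0 := by
          rw [← Matrix.mulVec_smul, ← hz', Matrix.mulVec_mulVec, hd, Matrix.zero_mulVec]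
        exact (mul_eq_zero.1 (congrFun h1 i)).resolve_left hx0
      obtain ⟨u, hu⟩ := h m z hdz
      have hu' : z = (d (m + 1)).mulVec u := funext fun i => sub_eq_zero.1 (hu i)
      obtain ⟨y, hy⟩ := h (m + 1) (w - x • u) (fun i => by
        rw [Matrix.mulVec_sub, Matrix.mulVec_smul, ← hu', hz', sub_self]; rfl)
      refine ⟨fun i => π (y i), fun i => ?_⟩
      rw [mulVec_map, ← map_sub, Ideal.mem_bot, hπ]
      have h3 : w i - x * u i = (d (m + 1 + 1)).mulVec y i := sub_eq_zero.1 (hy i)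
      exact ⟨u i, by linear_combination h3⟩) n (by omega)
    intro v hv
    obtain ⟨w, hw⟩ := hbar (fun i => π (v i)) (fun i => by
      rw [mulVec_map, ← map_mk_maximalIdeal]
      exact Ideal.mem_map_of_mem _ (hv i))
    choose u hu using fun i => Ideal.Quotient.mk_surjective (w i)
    obtain rfl : (fun i => π (u i)) = w := funext hu
    refine ⟨u, fun i => ?_⟩
    have := hw i
    rw [mulVec_map, ← map_sub, ← map_mk_maximalIdeal] at this
    obtain ⟨y, hy, hyx⟩ := (Ideal.mem_map_iff_of_surjective _ Ideal.Quotient.mk_surjective).1 this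
    rw [← sub_eq_zero, ← map_sub] at hyx
    have h2 := sub_mem hy (hI (Ideal.Quotient.eq_zero_iff_mem.1 hyx))
    rwa [sub_sub_cancel] at h2

end regular

/-! ### Splitting over regular local rings -/

section splits
open IsLocalRing TensorProduct

/-- An exact pair of matrices over a local ring which stays exact modulo the maximal ideal is
split: the map induced by `a` on the quotient by its kernel is injective over the residue field,
hence a split injection. -/
lemma exists_split {Q : Type*} [CommRing Q] [IsLocalRing Q] {l m n : Type} [Fintype l] [Fintype m]
    [Fintype n] [DecidableEq l] [DecidableEq m] [DecidableEq n]
    (a : Matrix l m Q) (b : Matrix m n Q) (hab : a * b = 0)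
    (h0 : ∀ v, a.mulVec v = 0 → ∃ w, v = b.mulVec w)
    (h1 : ∀ v, (∀ i, a.mulVec v i ∈ maximalIdeal Q) →
      ∃ w, ∀ i, v i - b.mulVec w i ∈ maximalIdeal Q) :
    ∃ (s : Matrix m l Q) (r : Matrix n m Q), s * a + b * r = 1 := by
  let f : (m → Q) →ₗ[Q] (l → Q) := Matrix.mulVecLin a
  let K : Submodule Q (m → Q) := LinearMap.ker f
  let L : ((m → Q) ⧸ K) →ₗ[Q] (l → Q) := K.liftQ f le_rfl
  have hbK : ∀ w, K.mkQ (b.mulVec w) = 0 := fun w => by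
    rw [Submodule.mkQ_apply, Submodule.Quotient.mk_eq_zero, LinearMap.mem_ker]
    simp [f, hab]
  have hinj : Function.Injective (L.lTensor (ResidueField Q)) := by
    rw [injective_iff_map_eq_zero]
    intro z hz
    obtain ⟨p, rfl⟩ := TensorProduct.mk_surjective Q ((m → Q) ⧸ K) (ResidueField Q)
      residue_surjective z
    obtain ⟨v, rfl⟩ := K.mkQ_surjective p
    have hz' : ∀ i, a.mulVec v i ∈ maximalIdeal Q := fun i => by
      have := congrArg (fun t => TensorProduct.rid Q _
        ((LinearMap.proj (R := Q) (φ := fun _ : l => Q) i).lTensor (ResidueField Q) t)) hz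
      rw [TensorProduct.mk_apply] at this
      simp only [LinearMap.lTensor_tmul, map_zero, TensorProduct.rid_tmul] at this
      rw [← residue_eq_zero_iff]
      simpa [Algebra.smul_def, L, f] using this
    obtain ⟨w, hw⟩ := h1 v hz'
    have : K.mkQ v = K.mkQ (v - b.mulVec w) := by rw [map_sub, hbK, sub_zero]
    rw [this, TensorProduct.mk_apply]
    conv_lhs => rw [pi_eq_sum_univ' (v - b.mulVec w)]
    rw [map_sum, TensorProduct.tmul_sum]
    refine Finset.sum_eq_zero fun i _ => ?_
    rw [map_smul, ← TensorProduct.smul_tmul]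
    have h2 : (v - b.mulVec w) i • (1 : ResidueField Q) = 0 := by
      rw [Algebra.smul_def, mul_one]
      exact (residue_eq_zero_iff _).2 (hw i)
    rw [h2, TensorProduct.zero_tmul]
  obtain ⟨σ, hσ⟩ := (split_injective_iff_lTensor_residueField_injective L).2 hinj
  obtain ⟨s, hs⟩ := Module.projective_lifting_property K.mkQ σ K.mkQ_surjective
  have hs' : ∀ v, K.mkQ (s (a.mulVec v)) = K.mkQ v := fun v => by
    have e1 := LinearMap.congr_fun hs (a.mulVec v)
    have e2 := LinearMap.congr_fun hσ (K.mkQ v)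
    exact e1.trans e2
  have hk : ∀ v, ∃ w, v - s (a.mulVec v) = b.mulVec w := fun v => by
    apply h0
    have : K.mkQ (v - s (a.mulVec v)) = 0 := by rw [map_sub, hs', sub_self]
    rwa [Submodule.mkQ_apply, Submodule.Quotient.mk_eq_zero, LinearMap.mem_ker] at this
  choose w hw using hk
  refine ⟨LinearMap.toMatrix' s, Matrix.of fun i j => w (Pi.single j 1) i, ?_⟩
  ext i j
  have := congrFun (hw (Pi.single j 1)) i
  have e : (LinearMap.toMatrix' s * a) i j = s (a.mulVec (Pi.single j 1)) i := by
    rw [← LinearMap.toMatrix'_mulVec s, Matrix.mulVec_mulVec, Matrix.mulVec_single_one]; rfl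
  rw [Matrix.add_apply, e, Matrix.mul_apply]
  rw [Pi.sub_apply, sub_eq_iff_eq_add] at this
  rw [Matrix.one_apply]
  rw [Pi.single_apply] at this
  rw [this, add_comm]
  rfl

/-- Over a regular local ring of dimension `D` every exact sequence of finite free modules splits
from degree `D` on. -/
lemma splitsFrom_of_regular (Q : Type u) [CommRing Q] [IsLocalRing Q] [IsNoetherianRing Q]
    (s : Finset Q) (hs : Ideal.span (s : Set Q) = maximalIdeal Q)
    (hd : (s.card : WithBot ℕ∞) = ringKrullDim Q) : SplitsFrom Q s.card := by
  intro ι _ _ d hdd he n hn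
  have := (regular_aux s.card Q s hs le_rfl hd.le).2 ι d hdd he n hn
  refine exists_split _ _ (hdd n) (fun v hv => ?_) this
  obtain ⟨w, hw⟩ := he n v fun i => by rw [hv]; rfl
  exact ⟨w, funext fun i => sub_eq_zero.1 (hw i)⟩

end splits

/-! ### Homology and flat base change -/

section homology
open TensorProduct

lemma mem_submoduleOf_iff {R M : Type*} [Ring R] [AddCommGroup M] [Module R M]
    {N K : Submodule R M} {x : K} : x ∈ N.submoduleOf K ↔ (x : M) ∈ N := Iff.rfl

/-- The homology `ker g / im f` of a pair of composable linear maps. -/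
abbrev Hlgy {R X₁ X₂ X₃ : Type*} [CommRing R] [AddCommGroup X₁] [Module R X₁] [AddCommGroup X₂]
    [Module R X₂] [AddCommGroup X₃] [Module R X₃] (f : X₁ →ₗ[R] X₂) (g : X₂ →ₗ[R] X₃) : Type _ :=
  LinearMap.ker g ⧸ (LinearMap.range f).submoduleOf (LinearMap.ker g)

lemma hlgy_equiv {R X₁ X₂ X₃ Y₁ Y₂ Y₃ : Type*} [CommRing R] [AddCommGroup X₁] [Module R X₁]
    [AddCommGroup X₂] [Module R X₂] [AddCommGroup X₃] [Module R X₃]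
    [AddCommGroup Y₁] [Module R Y₁] [AddCommGroup Y₂] [Module R Y₂] [AddCommGroup Y₃] [Module R Y₃]
    {f : X₁ →ₗ[R] X₂} {g : X₂ →ₗ[R] X₃} {f' : Y₁ →ₗ[R] Y₂} {g' : Y₂ →ₗ[R] Y₃}
    (e₁ : X₁ ≃ₗ[R] Y₁) (e₂ : X₂ ≃ₗ[R] Y₂) (e₃ : X₃ ≃ₗ[R] Y₃)
    (hf : ∀ x, e₂ (f x) = f' (e₁ x)) (hg : ∀ x, e₃ (g x) = g' (e₂ x)) :
    Nonempty (Hlgy f g ≃ₗ[R] Hlgy f' g') := by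
  have hZ : (LinearMap.ker g).map (e₂ : X₂ →ₗ[R] Y₂) = LinearMap.ker g' := by
    ext y
    rw [Submodule.mem_map_equiv, LinearMap.mem_ker, LinearMap.mem_ker,
      ← e₃.map_eq_zero_iff, hg, e₂.apply_symm_apply]
  refine ⟨Submodule.Quotient.equiv _ _ (e₂.ofSubmodules _ _ hZ) ?_⟩
  ext ⟨y, hy⟩
  simp only [Submodule.mem_map, mem_submoduleOf_iff, LinearMap.mem_range, Subtype.exists]
  constructor
  · rintro ⟨x, hx, ⟨w, rfl⟩, h⟩
    refine ⟨e₁ w, ?_⟩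
    rw [← hf]
    exact congrArg Subtype.val h
  · rintro ⟨w, rfl⟩
    have h : e₂ (f (e₁.symm w)) = f' w := by rw [hf, e₁.apply_symm_apply]
    refine ⟨f (e₁.symm w), ?_, ⟨_, rfl⟩, Subtype.ext h⟩
    rw [LinearMap.mem_ker, ← e₃.map_eq_zero_iff, hg, h]
    exact hy

/-- Homology commutes with flat base change. -/
lemma hlgy_baseChange {A X₁ X₂ X₃ : Type*} [CommRing A] [AddCommGroup X₁] [Module A X₁]
    [AddCommGroup X₂] [Module A X₂] [AddCommGroup X₃] [Module A X₃] (f : X₁ →ₗ[A] X₂)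
    (g : X₂ →ₗ[A] X₃) (hgf : g ∘ₗ f = 0) (L : Type*) [CommRing L] [Algebra A L] [Module.Flat A L] :
    Nonempty ((L ⊗[A] Hlgy f g) ≃ₗ[L] Hlgy (f.baseChange L) (g.baseChange L)) := by
  let Z := LinearMap.ker g
  have hfZ : ∀ x, f x ∈ Z := fun x => LinearMap.congr_fun hgf x
  let f₀ : X₁ →ₗ[A] Z := f.codRestrict Z hfZ
  let B : Submodule A Z := (LinearMap.range f).submoduleOf Z
  have hB : B = LinearMap.range f₀ := by
    ext ⟨x, hx⟩
    simp only [B, f₀, mem_submoduleOf_iff, LinearMap.mem_range, Subtype.ext_iff,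
      LinearMap.codRestrict_apply]
  have ex1 : Function.Exact f₀ B.mkQ := by
    rw [LinearMap.exact_iff, Submodule.ker_mkQ, hB]
  have ex2 := lTensor_exact L ex1 B.mkQ_surjective
  have ex3 := Module.Flat.lTensor_exact L (LinearMap.exact_subtype_ker_map g)
  have inj : Function.Injective (Z.subtype.lTensor L) :=
    Module.Flat.lTensor_preserves_injective_linearMap _ Z.injective_subtype
  have hcomp : ∀ x, Z.subtype.lTensor L (f₀.lTensor L x) = f.lTensor L x := fun x => by
    rw [← LinearMap.comp_apply, ← LinearMap.lTensor_comp]; rfl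
  let σ : (L ⊗[A] Z) →ₗ[L] LinearMap.ker (g.baseChange L) :=
    (Z.subtype.baseChange L).codRestrict _ fun x => (ex3 _).2 ⟨x, rfl⟩
  have hσ : Function.Surjective σ := by
    rintro ⟨y, hy⟩
    obtain ⟨x, hx⟩ := (ex3 y).1 hy
    exact ⟨x, Subtype.ext hx⟩
  let q : (L ⊗[A] Z) →ₗ[L] Hlgy (f.baseChange L) (g.baseChange L) :=
    (Submodule.mkQ (R := L) (M := LinearMap.ker (g.baseChange L)) _) ∘ₗ σ
  have hq : Function.Surjective q := (Submodule.mkQ_surjective _).comp hσ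
  let p := B.mkQ.baseChange L
  have hp : Function.Surjective p := LinearMap.lTensor_surjective L B.mkQ_surjective
  have hpq : LinearMap.ker p = LinearMap.ker q := by
    ext x
    have h1 : x ∈ LinearMap.ker p ↔ ∃ y, f₀.lTensor L y = x := ex2 x
    have h2 : x ∈ LinearMap.ker q ↔ ∃ y, f.lTensor L y = Z.subtype.lTensor L x := by
      rw [LinearMap.mem_ker, LinearMap.comp_apply, Submodule.mkQ_apply,
        Submodule.Quotient.mk_eq_zero, mem_submoduleOf_iff]
      rfl
    rw [h1, h2]
    refine exists_congr fun y => ?_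
    rw [← hcomp]
    exact inj.eq_iff.symm
  exact ⟨(p.quotKerEquivOfSurjective hp).symm.trans
    ((Submodule.quotEquivOfEq _ _ hpq).trans (q.quotKerEquivOfSurjective hq))⟩

lemma act_baseChange {A M : Type*} [CommRing A] [AddCommGroup M] [Module A M] (L : Type*)
    [CommRing L] [Algebra A L] {m n : Type} [Fintype m] [Fintype n] [DecidableEq m] [DecidableEq n]
    (D : Matrix m n A) (x : L ⊗[A] (n → M)) :
    piRight A L L (fun _ : m => M) ((act (RingHom.id A) M D).baseChange L x) =
      act (algebraMap A L) (L ⊗[A] M) D (piRight A L L (fun _ : n => M) x) := by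
  induction x using TensorProduct.induction_on with
  | zero => simp
  | add x y hx hy => simp only [map_add, hx, hy]
  | tmul l v =>
    ext i
    rw [act_apply, LinearMap.baseChange_tmul]
    simp only [piRight_apply, piRightHom_tmul, act_apply, RingHom.id_apply, algebraMap_smul,
      tmul_sum, tmul_smul]

/-- For a pair of matrices over `A`, flat base change of the homology with coefficients in `M` is
the homology with coefficients in `L ⊗ M`. -/
lemma hlgy_act_baseChange {A M : Type*} [CommRing A] [AddCommGroup M] [Module A M] (L : Type*)
    [CommRing L] [Algebra A L] [Module.Flat A L] {l m n : Type} [Fintype l] [Fintype m] [Fintype n]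
    [DecidableEq l] [DecidableEq m] [DecidableEq n] (D : Matrix l m A) (E : Matrix m n A)
    (h : D * E = 0) :
    Nonempty ((L ⊗[A] Hlgy (act (RingHom.id A) M E) (act (RingHom.id A) M D)) ≃ₗ[L]
      Hlgy (act (algebraMap A L) (L ⊗[A] M) E) (act (algebraMap A L) (L ⊗[A] M) D)) := by
  obtain ⟨e⟩ := hlgy_baseChange (act (RingHom.id A) M E) (act (RingHom.id A) M D) (by
    refine LinearMap.ext fun x => ?_
    rw [LinearMap.comp_apply, ← act_mul, h]
    ext i
    rw [act_apply]; simp) L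
  obtain ⟨e'⟩ := hlgy_equiv (f := (act (RingHom.id A) M E).baseChange L)
    (g := (act (RingHom.id A) M D).baseChange L) (piRight A L L (fun _ : n => M))
    (piRight A L L (fun _ : m => M))
    (piRight A L L (fun _ : l => M)) (act_baseChange L E) (act_baseChange L D)
  exact ⟨e.trans e'⟩

end homology

/-! ### Free resolutions and Tor -/

section resolution
open TensorProduct

/-- Every finitely generated module over a Noetherian ring has a resolution by free modules of
finite rank. -/
lemma exists_free_resolution (A : Type u) [CommRing A] [IsNoetherianRing A] (N : Type u)
    [AddCommGroup N] [Module A N] [Module.Finite A N] :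
    ∃ (b : ℕ → ℕ) (p : (Fin (b 0) → A) →ₗ[A] N)
      (g : ∀ n, (Fin (b (n + 1)) → A) →ₗ[A] (Fin (b n) → A)), Function.Surjective p ∧
      LinearMap.range (g 0) = LinearMap.ker p ∧
      ∀ n, LinearMap.range (g (n + 1)) = LinearMap.ker (g n) := by
  have step : ∀ S : (Σ b : ℕ, Submodule A (Fin b → A)), ∃ (b' : ℕ)
      (g : (Fin b' → A) →ₗ[A] (Fin S.1 → A)), LinearMap.range g = S.2 := fun S => by
    obtain ⟨b', g, hg⟩ := Module.Finite.exists_fin' A S.2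
    refine ⟨b', S.2.subtype ∘ₗ g, ?_⟩
    rw [LinearMap.range_comp, LinearMap.range_eq_top.2 hg, Submodule.map_top,
      Submodule.range_subtype]
  choose b' g' hg' using step
  obtain ⟨b₀, p, hp⟩ := Module.Finite.exists_fin' A N
  let S : ℕ → (Σ b : ℕ, Submodule A (Fin b → A)) := fun n =>
    Nat.rec ⟨b₀, LinearMap.ker p⟩ (fun _ S => ⟨b' S, LinearMap.ker (g' S)⟩) n
  exact ⟨fun n => (S n).1, p, fun n => g' (S n), hp, hg' _, fun n => hg' _⟩

variable {A : Type u} [CommRing A] {N : Type u} [AddCommGroup N] [Module A N]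

/-- The chain complex of `A`-modules given by an exact sequence of maps `A^{b (n+1)} → A^{b n}`. -/
noncomputable def freeComplex {b : ℕ → ℕ}
    (g : ∀ n, (Fin (b (n + 1)) → A) →ₗ[A] (Fin (b n) → A))
    (h : ∀ n, LinearMap.range (g (n + 1)) = LinearMap.ker (g n)) : ChainComplex (ModuleCat.{u} A) ℕ :=
  ChainComplex.of (fun n => ModuleCat.of A (Fin (b n) → A)) (fun n => ModuleCat.ofHom (g n))
    fun n => by
      rw [← ModuleCat.ofHom_comp, LinearMap.range_le_ker_iff.1 (h n).le]; rfl

lemma freeComplex_d {b : ℕ → ℕ} (g : ∀ n, (Fin (b (n + 1)) → A) →ₗ[A] (Fin (b n) → A))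
    (h : ∀ n, LinearMap.range (g (n + 1)) = LinearMap.ker (g n)) (n : ℕ) :
    (freeComplex g h).d (n + 1) n = ModuleCat.ofHom (g n) := by
  simp [freeComplex]

/-- The projective resolution of `N` given by a free resolution. -/
noncomputable def freeRes {b : ℕ → ℕ} (p : (Fin (b 0) → A) →ₗ[A] N)
    (g : ∀ n, (Fin (b (n + 1)) → A) →ₗ[A] (Fin (b n) → A)) (hp : Function.Surjective p)
    (h0 : LinearMap.range (g 0) = LinearMap.ker p)
    (h : ∀ n, LinearMap.range (g (n + 1)) = LinearMap.ker (g n)) :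
    ProjectiveResolution (ModuleCat.of A N) where
  complex := freeComplex g h
  projective n := by
    change Projective (ModuleCat.of A (Fin (b n) → A))
    infer_instance
  π := (ChainComplex.toSingle₀Equiv _ _).symm ⟨ModuleCat.ofHom p, by
    rw [freeComplex_d]
    exact ModuleCat.hom_ext (LinearMap.range_le_ker_iff.1 h0.le)⟩
  quasiIso := ⟨fun n => by
    cases n with
    | zero =>
      rw [ChainComplex.quasiIsoAt₀_iff, ShortComplex.quasiIso_iff_of_zeros']
      · refine ⟨(ShortComplex.moduleCat_exact_iff_range_eq_ker _).2 ?_,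
          (ModuleCat.epi_iff_surjective _).2 hp⟩
        exact (congrArg (fun f => LinearMap.range f.hom) (freeComplex_d g h 0)).trans h0
      all_goals rfl
    | succ n =>
      rw [quasiIsoAt_iff_exactAt']
      · rw [HomologicalComplex.exactAt_iff' _ (n + 1 + 1) (n + 1) n (by simp) (by simp)]
        refine (ShortComplex.moduleCat_exact_iff_range_eq_ker _).2 ?_
        exact (congrArg (fun f => LinearMap.range f.hom) (freeComplex_d g h (n + 1))).trans
          ((h n).trans (congrArg (fun f => LinearMap.ker f.hom) (freeComplex_d g h n)).symm)
      · apply ChainComplex.exactAt_succ_single_obj⟩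

/-- `Tor_{n+1}(M, N)` computed from a free resolution of `N`. -/
lemma tor_hlgy {b : ℕ → ℕ} (p : (Fin (b 0) → A) →ₗ[A] N)
    (g : ∀ n, (Fin (b (n + 1)) → A) →ₗ[A] (Fin (b n) → A)) (hp : Function.Surjective p)
    (h0 : LinearMap.range (g 0) = LinearMap.ker p)
    (h : ∀ n, LinearMap.range (g (n + 1)) = LinearMap.ker (g n))
    (M : Type u) [AddCommGroup M] [Module A M] (n : ℕ) :
    Nonempty ((((Tor (ModuleCat.{u} A) (n + 1)).obj (ModuleCat.of A M)).obj (ModuleCat.of A N)) ≃ₗ[A]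
      Hlgy ((g (n + 1)).lTensor M) ((g n).lTensor M)) := by
  let P := freeRes p g hp h0 h
  let F := (MonoidalCategory.tensoringLeft (ModuleCat.{u} A)).obj (ModuleCat.of A M)
  let e1 := P.isoLeftDerivedObj F (n + 1)
  let K := (F.mapHomologicalComplex (ComplexShape.down ℕ)).obj P.complex
  let e2 : K.homology (n + 1) ≅ _ := ShortComplex.homologyMapIso (K.isoSc' (n + 2) (n + 1) n (by simp) (by simp))
  let e3 := ShortComplex.moduleCatHomologyIso (K.sc' (n + 2) (n + 1) n)
  have hf : (K.sc' (n + 2) (n + 1) n).f = ModuleCat.ofHom ((g (n + 1)).lTensor M) :=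
    congrArg (fun f => F.map f) (freeComplex_d g h (n + 1))
  have hg : (K.sc' (n + 2) (n + 1) n).g = ModuleCat.ofHom ((g n).lTensor M) :=
    congrArg (fun f => F.map f) (freeComplex_d g h n)
  have hf' : (K.sc' (n + 2) (n + 1) n).f.hom = (g (n + 1)).lTensor M :=
    congrArg ModuleCat.Hom.hom hf
  have hg' : (K.sc' (n + 2) (n + 1) n).g.hom = (g n).lTensor M :=
    congrArg ModuleCat.Hom.hom hg
  let e4 := (e1 ≪≫ e2 ≪≫ e3).toLinearEquiv
  refine ⟨e4.trans (Submodule.Quotient.equiv _ _ (LinearEquiv.ofEq _ _ (congrArg LinearMap.ker hg')) ?_)⟩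
  ext ⟨y, hy⟩
  rw [mem_submoduleOf_iff, ← hf']
  constructor
  · rintro ⟨x, ⟨w, hw⟩, h⟩
    exact ⟨w, (congrArg Subtype.val hw).trans (congrArg Subtype.val h)⟩
  · rintro ⟨w, hw⟩
    exact ⟨_, ⟨w, rfl⟩, Subtype.ext hw⟩

end resolution

/-! ### Tor by matrices, and extending sequences by zero -/

section resolution
open TensorProduct

lemma piScalarRight_lTensor {A M : Type*} [CommRing A] [AddCommGroup M] [Module A M] {m n : Type}
    [Fintype m] [Fintype n] [DecidableEq m] [DecidableEq n] (D : Matrix m n A)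
    (x : M ⊗[A] (n → A)) :
    piScalarRight A A M m ((Matrix.mulVecLin D).lTensor M x) =
      act (RingHom.id A) M D (piScalarRight A A M n x) := by
  induction x using TensorProduct.induction_on with
  | zero => simp
  | add x y hx hy => simp only [map_add, hx, hy]
  | tmul x v =>
    ext i
    simp [act_apply, Matrix.mulVec, dotProduct, Finset.sum_smul, mul_smul]

/-- `Tor_{n+1}(M, N)` is the homology of a complex of matrices, exact with coefficients in `A`, that
depends only on `N`. -/
lemma exists_tor_matrices (A : Type u) [CommRing A] [IsNoetherianRing A] (N : Type u)
    [AddCommGroup N] [Module A N] [Module.Finite A N] :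
    ∃ (b : ℕ → ℕ) (a : ∀ n, Matrix (Fin (b n)) (Fin (b (n + 1))) A),
      (∀ n, a n * a (n + 1) = 0) ∧
      (∀ n v, (a n).mulVec v = 0 → ∃ w, v = (a (n + 1)).mulVec w) ∧
      ∀ (M : Type u) [AddCommGroup M] [Module A M] (n : ℕ),
        Nonempty ((((Tor (ModuleCat.{u} A) (n + 1)).obj (ModuleCat.of A M)).obj
          (ModuleCat.of A N)) ≃ₗ[A]
          Hlgy (act (RingHom.id A) M (a (n + 1))) (act (RingHom.id A) M (a n))) := by
  obtain ⟨b, p, g, hp, h0, h⟩ := exists_free_resolution A N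
  have hg : ∀ n, Matrix.mulVecLin (LinearMap.toMatrix' (g n)) = g n := fun n => by
    rw [← Matrix.toLin'_apply', Matrix.toLin'_toMatrix']
  refine ⟨b, fun n => LinearMap.toMatrix' (g n), fun n => ?_, fun n v hv => ?_, fun M _ _ n => ?_⟩
  · rw [← LinearMap.toMatrix'_comp, LinearMap.range_le_ker_iff.1 (h n).le, map_zero]
  · have : v ∈ LinearMap.ker (g n) := by rw [← hg n]; exact hv
    rw [← h n] at this
    obtain ⟨w, hw⟩ := this
    refine ⟨w, ?_⟩
    rw [← hw]
    exact (LinearMap.congr_fun (hg (n + 1)) w).symm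
  · obtain ⟨e⟩ := tor_hlgy p g hp h0 h M n
    obtain ⟨e'⟩ := hlgy_equiv (f := (g (n + 1)).lTensor M) (g := (g n).lTensor M)
      (f' := act (RingHom.id A) M (LinearMap.toMatrix' (g (n + 1))))
      (g' := act (RingHom.id A) M (LinearMap.toMatrix' (g n)))
      (piScalarRight A A M _) (piScalarRight A A M _) (piScalarRight A A M _)
      (fun x => by rw [← piScalarRight_lTensor, hg]) (fun x => by rw [← piScalarRight_lTensor, hg])
    exact ⟨e.trans e'⟩

end resolution

namespace CIData
variable {Q : Type u} [CommRing Q] {f : ℕ → Q} {c : ℕ}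

/-- Adjoin a zero term at the bottom of the sequence. -/
def pad (F : CIData f c) : CIData f c where
  ι n := match n with
    | 0 => Empty
    | n + 1 => F.ι n
  fin n := match n with
    | 0 => inferInstanceAs (Fintype Empty)
    | n + 1 => F.fin n
  dec n := match n with
    | 0 => inferInstanceAs (DecidableEq Empty)
    | n + 1 => F.dec n
  d n := match n with
    | 0 => fun i => i.elim
    | n + 1 => F.d n
  t k n := match n with
    | 0 => fun i => i.elim
    | n + 1 => F.t k n
  hd n := match n with
    | 0 => by ext i; exact i.elim
    | n + 1 => F.hd n

/-- Adjoin `N` zero terms at the bottom of the sequence. -/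
def padN (F : CIData f c) : ℕ → CIData f c
  | 0 => F
  | N + 1 => (F.padN N).pad

variable {L X : Type*} [CommRing L] [AddCommGroup X] [Module L X] {φ : Q →+* L}

lemma padN_le (F : CIData f c) (N n : ℕ) :
    (F.padN N).Z φ X (n + N) ≤ (F.padN N).B φ X (n + N) ↔ F.Z φ X n ≤ F.B φ X n := by
  induction N with
  | zero => rfl
  | succ N ih => exact ih

lemma padN_subArt (F : CIData f c) (N n : ℕ) :
    SubArt ((F.padN N).B φ X (n + N)) ((F.padN N).Z φ X (n + N)) ↔
      SubArt (F.B φ X n) (F.Z φ X n) := by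
  induction N with
  | zero => rfl
  | succ N ih => exact ih

lemma padN_exactMod (F : CIData f c) (I : Ideal Q) (N n : ℕ) :
    ExactMod (F.padN N).d I (n + N) ↔ ExactMod F.d I n := by
  induction N with
  | zero => rfl
  | succ N ih => exact ih

/-- Rigidity for a sequence which is exact modulo `(f₀, …, f_{c-1})` in all degrees. -/
lemma rigidity' {D : ℕ} (hQ : SplitsFrom Q D) (hf : WeakReg f c) (hφ : ∀ k < c, φ (f k) = 0)
    (F : CIData f c) (he : ∀ n, ExactMod F.d (seqIdeal f c) n) (n₀ : ℕ)
    (h : ∀ n ≥ n₀, F.Z φ X n ≤ F.B φ X n) : ∀ n, D ≤ n + c → F.Z φ X n ≤ F.B φ X n := by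
  intro n hn
  rw [← padN_le F c]
  refine rigidity hQ hf hφ (F.padN c) (fun m hm => ?_) (n₀ + c) (fun m hm => ?_) _ hn
  · obtain ⟨m, rfl⟩ := Nat.exists_eq_add_of_le' hm
    exact (padN_exactMod F _ c m).2 (he m)
  · obtain ⟨m, rfl⟩ := Nat.exists_eq_add_of_le' (show c ≤ m by omega)
    exact (padN_le F c m).2 (h m (by omega))

/-- Eventual periodicity of vanishing for a sequence which is exact modulo `(f₀, …, f_{c-1})` in
all degrees and has Artinian homology. -/
lemma eventually_vanish' {D : ℕ} (hQ : SplitsFrom Q D) (hf : WeakReg f c)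
    (hφ : ∀ k < c, φ (f k) = 0) (F : CIData f c) (he : ∀ n, ExactMod F.d (seqIdeal f c) n)
    (hs : ∀ n, D ≤ n + c → SubArt (F.B φ X n) (F.Z φ X n)) :
    ∃ n₀, ∀ n ≥ n₀, F.Z φ X n ≤ F.B φ X n → F.Z φ X (n + 2) ≤ F.B φ X (n + 2) := by
  -- passing to `max D c` avoids the bottom of the padded sequence, where the homology is too large
  have hQ' : SplitsFrom Q (max D c) := fun ι _ _ d hd h n hn => hQ ι d hd h n (by omega)
  obtain ⟨n₀, h⟩ := eventually_vanish (φ := φ) (X := X) hQ' hf hφ (F.padN c) (fun m hm => by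
    obtain ⟨m, rfl⟩ := Nat.exists_eq_add_of_le' hm
    exact (padN_exactMod F _ c m).2 (he m)) (fun m hm => by
    obtain ⟨m, rfl⟩ := Nat.exists_eq_add_of_le' (show c ≤ m by omega)
    exact (padN_subArt F c m).2 (hs m (by omega)))
  refine ⟨n₀, fun n hn hZ => ?_⟩
  rw [← padN_le F c] at hZ ⊢
  have := h (n + c) (by omega) hZ
  rwa [show n + c + 2 = n + 2 + c by omega] at this

end CIData

/-! ### Support and finite length after base change -/

section support
open TensorProduct IsLocalRing

/-- The support can be tested after base change to a flat local algebra whose closed point lies over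
`p`. The module is not assumed finitely generated. -/
lemma mem_support_iff_nontrivial_tensor {A L T : Type*} [CommRing A] [CommRing L] [Algebra A L]
    [IsLocalRing L] [Module.Flat A L] [AddCommGroup T] [Module A T] (p : PrimeSpectrum A)
    (hp : (maximalIdeal L).comap (algebraMap A L) = p.asIdeal) :
    p ∈ Module.support A T ↔ Nontrivial (L ⊗[A] T) := by
  have hp' : ∀ a, a ∈ p.asIdeal ↔ algebraMap A L a ∈ maximalIdeal L := fun a => by
    rw [← hp, Ideal.mem_comap]
  constructor
  · intro h
    obtain ⟨t, ht⟩ := Module.mem_support_iff_exists_annihilator.1 h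
    -- the residue field of `L` is a quotient of `L ⊗ A/Ann(t)`, which embeds into `L ⊗ T`
    let g : A →ₗ[A] T := LinearMap.toSpanSingleton A T t
    have hg : ∀ a ∈ LinearMap.ker g, algebraMap A (ResidueField L) a = 0 := fun a ha => by
      rw [IsScalarTower.algebraMap_apply A L]
      refine (residue_eq_zero_iff _).2 ((hp' a).1 (ht ?_))
      rw [Submodule.mem_annihilator_span_singleton]
      exact ha
    let j : (A ⧸ LinearMap.ker g) →ₗ[A] T := (LinearMap.ker g).liftQ g le_rfl
    have hj : Function.Injective j := by
      rw [← LinearMap.ker_eq_bot]; exact Submodule.ker_liftQ_eq_bot' _ _ rfl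
    have hj' : Function.Injective (j.lTensor L) :=
      Module.Flat.lTensor_preserves_injective_linearMap _ hj
    let r : (A ⧸ LinearMap.ker g) →ₗ[A] ResidueField L :=
      (LinearMap.ker g).liftQ (Algebra.linearMap A (ResidueField L)) hg
    let m : (L ⊗[A] (A ⧸ LinearMap.ker g)) →ₗ[A] ResidueField L :=
      TensorProduct.lift ((LinearMap.mul A (ResidueField L)).compl₁₂
        (IsScalarTower.toAlgHom A L (ResidueField L)).toLinearMap r)
    have hm : m (1 ⊗ₜ Submodule.Quotient.mk 1) = 1 := by
      change algebraMap L (ResidueField L) 1 * algebraMap A (ResidueField L) 1 = 1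
      rw [map_one, map_one, mul_one]
    refine ⟨j.lTensor L (1 ⊗ₜ Submodule.Quotient.mk 1), 0, fun h0 => ?_⟩
    rw [← map_zero (j.lTensor L)] at h0
    have h1 := hj' h0
    rw [h1, map_zero] at hm
    exact zero_ne_one hm
  · intro h
    by_contra h0
    rw [Module.notMem_support_iff'] at h0
    refine not_subsingleton (L ⊗[A] T) (subsingleton_of_forall_eq 0 fun z => ?_)
    induction z using TensorProduct.induction_on with
    | zero => rfl
    | add x y hx hy => rw [hx, hy, add_zero]
    | tmul l t =>
      obtain ⟨s, hs, hst⟩ := h0 t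
      have hu : IsUnit (algebraMap A L s) := by
        by_contra hu
        exact hs ((hp' s).2 ((mem_maximalIdeal _).2 hu))
      obtain ⟨w, hw⟩ := hu.exists_right_inv
      have : l = s • (w * l) := by
        rw [Algebra.smul_def, ← mul_assoc, hw, one_mul]
      rw [this, TensorProduct.smul_tmul, hst, TensorProduct.tmul_zero]

/-- If every prime of `L` over the annihilator of the finitely generated module `T` is maximal, then
`L ⊗ T` is Artinian, being finitely generated over an Artinian quotient of `L`. -/
lemma isArtinian_tensor {A L T : Type*} [CommRing A] [CommRing L] [Algebra A L]
    [IsNoetherianRing L] [AddCommGroup T] [Module A T] [Module.Finite A T]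
    (h : ∀ 𝔔 : Ideal L, 𝔔.IsPrime → Module.annihilator A T ≤ 𝔔.comap (algebraMap A L) →
      𝔔.IsMaximal) : IsArtinian L (L ⊗[A] T) := by
  let I : Ideal L := (Module.annihilator A T).map (algebraMap A L)
  have htors : Module.IsTorsionBySet L (L ⊗[A] T) I := by
    rw [Module.isTorsionBySet_iff_subset_annihilator]
    change I ≤ _
    refine Ideal.map_le_iff_le_comap.2 fun a ha => ?_
    rw [Ideal.mem_comap, Module.mem_annihilator]
    intro z
    rw [algebraMap_smul]
    induction z using TensorProduct.induction_on with
    | zero => exact smul_zero _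
    | add x y hx hy => rw [smul_add, hx, hy, add_zero]
    | tmul l t =>
      rw [← TensorProduct.tmul_smul, Module.mem_annihilator.1 ha, TensorProduct.tmul_zero]
  have : IsArtinianRing (L ⧸ I) := by
    rw [isArtinianRing_iff_isNoetherianRing_krullDimLE_zero]
    refine ⟨inferInstance, Ring.krullDimLE_zero_iff.2 fun P hP => ?_⟩
    have hc : (P.comap (Ideal.Quotient.mk I)).IsPrime := Ideal.comap_isPrime _ _
    have := h _ hc (Ideal.map_le_iff_le_comap.1 ((Ideal.mk_ker (I := I)).symm.le.trans
      (Ideal.comap_mono bot_le)))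
    rw [← Ideal.map_comap_of_surjective _ Ideal.Quotient.mk_surjective P]
    refine (Ideal.map_eq_top_or_isMaximal_of_surjective _ Ideal.Quotient.mk_surjective
      this).resolve_left ?_
    rw [Ideal.map_comap_of_surjective _ Ideal.Quotient.mk_surjective P]
    exact hP.ne_top
  let _ := htors.module
  have : IsScalarTower L (L ⧸ I) (L ⊗[A] T) := htors.isScalarTower
  have : Module.Finite (L ⧸ I) (L ⊗[A] T) := Module.Finite.of_restrictScalars_finite L _ _
  have : IsArtinian (L ⧸ I) (L ⊗[A] T) := inferInstance
  exact isArtinian_of_surjective_algebraMap (R := L ⧸ I) Ideal.Quotient.mk_surjective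

lemma subArt_of_isArtinian {L C : Type*} [CommRing L] [AddCommGroup C] [Module L C]
    {B Z : Submodule L C} (h : IsArtinian L (Z ⧸ B.submoduleOf Z)) : SubArt B Z := by
  intro J hB hZ hJ
  let g : ℕ →o (Submodule L (Z ⧸ B.submoduleOf Z))ᵒᵈ :=
    ⟨fun s => OrderDual.toDual (((J s).submoduleOf Z).map (B.submoduleOf Z).mkQ), fun s t hst =>
      Submodule.map_mono (Submodule.comap_mono (hJ hst))⟩
  obtain ⟨s₀, hs₀⟩ := IsArtinian.monotone_stabilizes g
  have key : ∀ s, J s = ((((g s).ofDual).comap (B.submoduleOf Z).mkQ).map Z.subtype) := fun s => by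
    change J s = ((((J s).submoduleOf Z).map (B.submoduleOf Z).mkQ).comap _).map Z.subtype
    rw [Submodule.comap_map_mkQ, sup_eq_right.2 (Submodule.comap_mono (hB s))]
    exact ((Submodule.map_comap_subtype _ _).trans (inf_of_le_right (hZ s))).symm
  refine ⟨s₀, fun s hs => ?_⟩
  rw [key s, key s₀, hs₀ s hs]

lemma subsingleton_quotient_submoduleOf {L C : Type*} [CommRing L] [AddCommGroup C] [Module L C]
    {B Z : Submodule L C} : Subsingleton (Z ⧸ B.submoduleOf Z) ↔ Z ≤ B := by
  rw [Submodule.Quotient.subsingleton_iff, Submodule.submoduleOf_eq_top]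

end support

/-! ### Lifting a resolution from the completion -/

section lifting
open TensorProduct

lemma act_map {Q L X Y m n : Type*} [CommRing Q] [CommRing L] [AddCommGroup X] [Module L X]
    [AddCommGroup Y] [Module L Y] [Fintype n] (φ : Q →+* L) (g : X →ₗ[L] Y) (D : Matrix m n Q)
    (v : n → X) : act φ Y D (g ∘ v) = g ∘ act φ X D v := by
  ext i
  simp only [act_apply, Function.comp_apply, map_sum, map_smul]

/-- Exactness of matrices is preserved by flat base change. -/
lemma exact_of_flat {A R : Type*} [CommRing A] [CommRing R] [Algebra A R] [Module.Flat A R]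
    {l m n : Type} [Fintype l] [Fintype m] [Fintype n] [DecidableEq l] [DecidableEq m]
    [DecidableEq n] (D : Matrix l m A) (E : Matrix m n A) (h : D * E = 0)
    (hex : ∀ v, D.mulVec v = 0 → ∃ w, v = E.mulVec w) (v : m → R)
    (hv : act (algebraMap A R) R D v = 0) : ∃ w, v = act (algebraMap A R) R E w := by
  obtain ⟨e⟩ := hlgy_act_baseChange (M := A) R D E h
  have h0 : Subsingleton (Hlgy (act (RingHom.id A) A E) (act (RingHom.id A) A D)) := by
    rw [subsingleton_quotient_submoduleOf]
    intro x hx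
    have hmul : ∀ {p q : Type} [Fintype q] (C : Matrix p q A) y,
        act (RingHom.id A) A C y = C.mulVec y := fun C y => by
      ext i; simp [act_apply, Matrix.mulVec, dotProduct]
    rw [LinearMap.mem_ker, hmul] at hx
    obtain ⟨w, hw⟩ := hex x hx
    exact ⟨w, (hmul _ _).trans hw.symm⟩
  have h1 := subsingleton_quotient_submoduleOf.1 e.symm.injective.subsingleton
  let r := AlgebraTensorModule.rid A R R
  have h2 : r.symm ∘ v ∈ LinearMap.ker (act (algebraMap A R) (R ⊗[A] A) D) := by
    rw [LinearMap.mem_ker]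
    refine (act_map _ r.symm.toLinearMap D v).trans ?_
    rw [hv]
    ext i; exact map_zero r.symm
  obtain ⟨w, hw⟩ := h1 h2
  refine ⟨r ∘ w, ?_⟩
  refine Eq.trans ?_ (act_map _ r.toLinearMap E w).symm
  rw [hw]
  ext i; exact (r.apply_symm_apply _).symm

/-- An exact complex of matrices over `A`, extended to a flat algebra `R = Q/(f₀, …, f_{c-1})`, lifts
to a sequence of matrices over `Q`. -/
lemma exists_lift {A R : Type*} {Q : Type u} [CommRing A] [CommRing R] [CommRing Q] [Algebra A R]
    [Module.Flat A R] {f : ℕ → Q} {c : ℕ} (π : Q →+* R) (hπ : Function.Surjective π)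
    (hk : RingHom.ker π = seqIdeal f c) {b : ℕ → ℕ}
    (a : ∀ n, Matrix (Fin (b n)) (Fin (b (n + 1))) A) (haa : ∀ n, a n * a (n + 1) = 0)
    (hex : ∀ n v, (a n).mulVec v = 0 → ∃ w, v = (a (n + 1)).mulVec w) :
    ∃ (D : ∀ n, Matrix (Fin (b n)) (Fin (b (n + 1))) Q)
      (t : ℕ → ∀ n, Matrix (Fin (b n)) (Fin (b (n + 2))) Q),
      (∀ n, D n * D (n + 1) = ∑ k ∈ Finset.range c, f k • t k n) ∧
      (∀ n i j, π (D n i j) = algebraMap A R (a n i j)) ∧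
      ∀ n, ExactMod D (seqIdeal f c) n := by
  choose D hD using fun n i j => hπ (algebraMap A R (a n i j))
  have hDD : ∀ n, ∃ t : ℕ → Matrix (Fin (b n)) (Fin (b (n + 2))) Q,
      Matrix.of (D n) * Matrix.of (D (n + 1)) = ∑ k ∈ Finset.range c, f k • t k := fun n => by
    refine exists_matrix_sum _ fun i j => ?_
    rw [← hk, RingHom.mem_ker, Matrix.mul_apply, map_sum]
    have := congrArg (algebraMap A R) (congrFun (congrFun (haa n) i) j)
    rw [Matrix.mul_apply, map_sum, Matrix.zero_apply, map_zero] at this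
    simpa only [map_mul, Matrix.of_apply, hD] using this
  choose t ht using hDD
  refine ⟨fun n => Matrix.of (D n), fun k n => t n k, ht, hD, fun n v hv => ?_⟩
  have hact : ∀ n (v : Fin (b (n + 1)) → Q) i, π ((Matrix.of (D n)).mulVec v i) =
      act (algebraMap A R) R (a n) (π ∘ v) i := fun n v i => by
    simp [act_apply, Matrix.mulVec, dotProduct, hD]
  obtain ⟨w, hw⟩ := exact_of_flat (R := R) _ _ (haa n) (hex n) (π ∘ v) (by
    ext i
    rw [← hact]
    have := hv i
    rwa [← hk] at this)
  choose w' hw' using fun i => hπ (w i)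
  have hww : w = π ∘ w' := funext fun i => (hw' i).symm
  refine ⟨w', fun i => ?_⟩
  rw [← hk, RingHom.mem_ker, map_sub, hact, ← hww, ← hw]
  exact sub_self _

end lifting

/-! ### Choosing the prime -/

section core
open TensorProduct

/-- The homology in degree `n` of the complex `a` of matrices, with coefficients in `M`. -/
abbrev MatHlgy {A : Type*} [CommRing A] {b : ℕ → ℕ}
    (a : ∀ n, Matrix (Fin (b n)) (Fin (b (n + 1))) A) (M : Type*) [AddCommGroup M] [Module A M]
    (n : ℕ) : Type _ :=
  Hlgy (act (RingHom.id A) M (a (n + 1))) (act (RingHom.id A) M (a n))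

/-- Rigidity and eventual periodicity of vanishing for the homology of a complex of matrices over
`A`, after base change to a flat `A`-algebra `L` over a flat algebra `R = Q/(f₀, …, f_{c-1})`. -/
lemma local_vanishing {A R L : Type*} {Q : Type u} [CommRing A] [CommRing R] [CommRing L]
    [CommRing Q] [Algebra A R] [Algebra A L] [Algebra R L] [IsScalarTower A R L]
    [Module.Flat A R] [Module.Flat A L] {f : ℕ → Q} {c N : ℕ} (π : Q →+* R)
    (hπ : Function.Surjective π) (hk : RingHom.ker π = seqIdeal f c)
    (hQ : SplitsFrom Q N) (hf : WeakReg f c) {b : ℕ → ℕ}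
    (a : ∀ n, Matrix (Fin (b n)) (Fin (b (n + 1))) A) (haa : ∀ n, a n * a (n + 1) = 0)
    (hex : ∀ n v, (a n).mulVec v = 0 → ∃ w, v = (a (n + 1)).mulVec w)
    (M : Type*) [AddCommGroup M] [Module A M] :
    (∀ n₀, (∀ n ≥ n₀, Subsingleton (L ⊗[A] MatHlgy a M n)) →
      ∀ n, N ≤ n + c → Subsingleton (L ⊗[A] MatHlgy a M n)) ∧
    ((∀ n, N ≤ n + c → IsArtinian L (L ⊗[A] MatHlgy a M n)) →
      ∃ n₀, ∀ n ≥ n₀, Subsingleton (L ⊗[A] MatHlgy a M n) →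
        Subsingleton (L ⊗[A] MatHlgy a M (n + 2))) := by
  obtain ⟨D, t, hDt, hD, he⟩ := exists_lift π hπ hk a haa hex
  let F : CIData f c := { ι := fun n => Fin (b n), d := D, t := t, hd := hDt }
  let φ : Q →+* L := (algebraMap R L).comp π
  have hφ : ∀ k < c, φ (f k) = 0 := fun k hkc => by
    have : π (f k) = 0 := by
      rw [← RingHom.mem_ker, hk]; exact mem_seqIdeal hkc
    rw [RingHom.comp_apply, this, map_zero]
  have hact : ∀ n, act φ (L ⊗[A] M) (D n) = act (algebraMap A L) (L ⊗[A] M) (a n) := fun n => by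
    refine LinearMap.ext fun v => funext fun i => ?_
    rw [act_apply, act_apply]
    refine Finset.sum_congr rfl fun j _ => ?_
    rw [IsScalarTower.algebraMap_apply A R L, ← hD]
    rfl
  have hiso : ∀ n, Nonempty ((L ⊗[A] MatHlgy a M n) ≃ₗ[L]
      Hlgy (act φ (L ⊗[A] M) (D (n + 1))) (act φ (L ⊗[A] M) (D n))) := fun n => by
    rw [hact, hact]
    exact hlgy_act_baseChange L _ _ (haa n)
  have hsub : ∀ n, Subsingleton (L ⊗[A] MatHlgy a M n) ↔
      F.Z φ (L ⊗[A] M) n ≤ F.B φ (L ⊗[A] M) n := fun n => by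
    obtain ⟨e⟩ := hiso n
    exact e.toEquiv.subsingleton_congr.trans subsingleton_quotient_submoduleOf
  simp only [hsub]
  refine ⟨F.rigidity' hQ hf hφ he, fun h => F.eventually_vanish' hQ hf hφ he fun n hn => ?_⟩
  obtain ⟨e⟩ := hiso n
  have := h n hn
  have h' := isArtinian_of_linearEquiv e
  exact subArt_of_isArtinian h'

/-- Among the primes of `A` that lie in the support of the homology in infinitely many degrees, choose
one, `p`, of least height. By rigidity over the local rings of `R`, every prime in the support in
a single degree `n ≥ N - c` is of this kind, so `p` is a minimal element of each such support that
contains it, and therefore an associated prime there. Let `q` be a prime of `R` minimal over `pR`: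
over `R_q` the homology has finite length, so vanishing in degree `n` eventually implies vanishing
in degree `n + 2`, which means that `p` belongs to the support in all large degrees of one
parity. -/
lemma exists_prime_forall_mem_associatedPrimes {A R : Type*} {Q : Type u} [CommRing A] [CommRing R]
    [CommRing Q] [Algebra A R] [IsNoetherianRing A] [IsNoetherianRing R]
    [Module.Flat A R] (hs : Function.Surjective (PrimeSpectrum.comap (algebraMap A R)))
    {f : ℕ → Q} {c N : ℕ} (π : Q →+* R)
    (hπ : Function.Surjective π) (hk : RingHom.ker π = seqIdeal f c)
    (hQ : SplitsFrom Q N) (hf : WeakReg f c) {b : ℕ → ℕ}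
    (a : ∀ n, Matrix (Fin (b n)) (Fin (b (n + 1))) A) (haa : ∀ n, a n * a (n + 1) = 0)
    (hex : ∀ n v, (a n).mulVec v = 0 → ∃ w, v = (a (n + 1)).mulVec w)
    (M : Type*) [AddCommGroup M] [Module A M] [Module.Finite A M]
    (hne : ∃ n, N ≤ n + c ∧ Nontrivial (MatHlgy a M n)) :
    ∃ p : Ideal A, p.IsPrime ∧ ∃ n₀, ∃ r, ∀ i, n₀ ≤ 2 * i + r →
      p ∈ associatedPrimes A (MatHlgy a M (2 * i + r)) := by
  let S : ℕ → Set (PrimeSpectrum A) := fun n => Module.support A (MatHlgy a M n)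
  let Bad : Set (PrimeSpectrum A) := {p | ∀ n₀, ∃ n ≥ n₀, p ∈ S n}
  have hloc : ∀ (q : PrimeSpectrum R) (T : Type _) [AddCommGroup T] [Module A T],
      PrimeSpectrum.comap (algebraMap A R) q ∈ Module.support A T ↔
        Nontrivial (Localization.AtPrime q.asIdeal ⊗[A] T) := fun q T _ _ => by
    have : Module.Flat A (Localization.AtPrime q.asIdeal) := Module.Flat.trans A R _
    refine mem_support_iff_nontrivial_tensor _ ?_
    rw [IsScalarTower.algebraMap_eq A R, ← Ideal.comap_comap]
    exact congrArg (Ideal.comap (algebraMap A R))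
      (IsLocalization.AtPrime.under_maximalIdeal _ q.asIdeal)
  have hbad : ∀ p n, N ≤ n + c → p ∈ S n → p ∈ Bad := fun p n hn hp n₀ => by
    obtain ⟨q, rfl⟩ := hs p
    have : Module.Flat A (Localization.AtPrime q.asIdeal) := Module.Flat.trans A R _
    by_contra! h
    have := (local_vanishing (L := Localization.AtPrime q.asIdeal) π hπ hk hQ hf a haa hex M).1 n₀
      (fun m hm => not_nontrivial_iff_subsingleton.1 fun h' => h m hm ((hloc q _).2 h')) n hn
    exact not_nontrivial_iff_subsingleton.2 this ((hloc q _).1 hp)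
  obtain ⟨n, hn, hnt⟩ := hne
  obtain ⟨p₀, hp₀⟩ : (S n).Nonempty := Module.nonempty_support_of_nontrivial
  obtain ⟨p, hp, hmin⟩ := WellFounded.has_min
    (InvImage.wf (fun p : PrimeSpectrum A => p.asIdeal.height) wellFounded_lt) Bad ⟨p₀, hbad _ _ hn hp₀⟩
  have hmin' : ∀ m, N ≤ m + c → ∀ p' ∈ S m, p' ≤ p → p' = p := fun m hm p' hp' hle =>
    hle.eq_of_not_lt fun hlt =>
      hmin p' (hbad p' m hm hp') (Ideal.height_strict_mono_of_isPrime hlt)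
  -- a prime `q` of `R` lying over `p` and minimal over `pR`
  obtain ⟨q₀, hq₀⟩ := hs p
  have hq₀' : p.asIdeal.map (algebraMap A R) ≤ q₀.asIdeal := by
    rw [Ideal.map_le_iff_le_comap, ← hq₀]; rfl
  obtain ⟨q, hq, hqq₀⟩ := Ideal.exists_minimalPrimes_le hq₀'
  have hqp : q.IsPrime := hq.1.1
  have hcq : PrimeSpectrum.comap (algebraMap A R) ⟨q, hqp⟩ = p := by
    refine PrimeSpectrum.ext (le_antisymm ?_ (Ideal.map_le_iff_le_comap.1 hq.1.2))
    rw [← hq₀]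
    exact Ideal.comap_mono hqq₀
  let L := Localization.AtPrime q
  have : Module.Flat A L := Module.Flat.trans A R _
  have hloc' : ∀ n, p ∈ S n ↔ Nontrivial (L ⊗[A] MatHlgy a M n) := fun n => by
    rw [← hcq]; exact hloc ⟨q, hqp⟩ _
  obtain ⟨n₀, hn₀⟩ := (local_vanishing (L := L) π hπ hk hQ hf a haa hex M).2 fun m hm => by
    refine isArtinian_tensor fun P hP hle => ?_
    have h1 : PrimeSpectrum.comap (algebraMap A L) ⟨P, hP⟩ ∈ S m := by
      rw [Module.mem_support_iff_of_finite]; exact hle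
    have hPR : P.comap (algebraMap R L) ≤ q :=
      (Ideal.comap_mono (IsLocalRing.le_maximalIdeal hP.ne_top)).trans
        (IsLocalization.AtPrime.under_maximalIdeal L q).le
    have hcc : P.comap (algebraMap A L) = (P.comap (algebraMap R L)).comap (algebraMap A R) := by
      rw [Ideal.comap_comap, ← IsScalarTower.algebraMap_eq]
    have h2 := hmin' m hm _ h1 (by
      rw [← hcq]
      change P.comap (algebraMap A L) ≤ q.comap (algebraMap A R)
      rw [hcc]
      exact Ideal.comap_mono hPR)
    have h3 : p.asIdeal = (P.comap (algebraMap R L)).comap (algebraMap A R) := by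
      rw [← hcc, ← h2]; rfl
    have h4 : P.comap (algebraMap R L) = q := le_antisymm hPR
      (hq.2 ⟨Ideal.comap_isPrime _ _, Ideal.map_le_iff_le_comap.2 h3.le⟩ hPR)
    have h5 : P = IsLocalRing.maximalIdeal L := by
      rw [← IsLocalization.map_under q.primeCompl L P, Ideal.under, h4]
      exact IsLocalization.AtPrime.map_eq_maximalIdeal q L
    rw [h5]
    exact IsLocalRing.maximalIdeal.isMaximal L
  have hstep : ∀ n ≥ n₀, p ∈ S (n + 2) → p ∈ S n := fun n hn h => by
    by_contra h'
    rw [hloc', not_nontrivial_iff_subsingleton] at h'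
    exact not_nontrivial_iff_subsingleton.2 (hn₀ n hn h') ((hloc' _).1 h)
  have hass : ∀ n, N ≤ n + c → p ∈ S n → p.asIdeal ∈ associatedPrimes A (MatHlgy a M n) := by
    intro n hn h
    refine Module.associatedPrimes.minimalPrimes_annihilator_subset_associatedPrimes A _ ?_
    refine ⟨⟨p.2, Module.mem_support_iff_of_finite.1 h⟩, fun p' hp' hle => ?_⟩
    have := hmin' n hn ⟨p', hp'.1⟩ (Module.mem_support_iff_of_finite.2 hp'.2) hle
    rw [← this]
  -- the degrees of one of the two parities in which `p` is in the support are unbounded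
  have hpar : ∃ r, ∀ k, ∃ i ≥ k, p ∈ S (2 * i + r) := by
    by_contra! h
    obtain ⟨k₀, h₀⟩ := h 0
    obtain ⟨k₁, h₁⟩ := h 1
    obtain ⟨m, hm, hpm⟩ := hp (2 * (k₀ + k₁) + 1)
    obtain ⟨i, rfl | rfl⟩ := Nat.even_or_odd' m
    · exact h₀ i (by omega) hpm
    · exact h₁ i (by omega) hpm
  obtain ⟨r, hr⟩ := hpar
  refine ⟨p.asIdeal, p.2, max n₀ N, r, fun i hi => hass _ (by omega) ?_⟩
  obtain ⟨k, hik, hk⟩ := hr i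
  induction k, hik using Nat.le_induction with
  | base => exact hk
  | succ k hik ih => exact ih (hstep (2 * k + r) (by omega) (by convert hk using 2; ring))

end core

/-! ### Regular sequences and dimension of the completion -/

section setup
open IsLocalRing

lemma seqIdeal_getD {Q : Type*} [CommRing Q] (rs : List Q) {k : ℕ} (hk : k ≤ rs.length) :
    seqIdeal (fun k => rs.getD k 0) k = Ideal.ofList (rs.take k) := by
  rw [seqIdeal, Ideal.ofList]
  congr 1
  ext x
  simp only [Set.mem_image, Set.mem_Iio, Set.mem_ofPred_eq, List.mem_take_iff_getElem]
  constructor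
  · rintro ⟨i, hi, rfl⟩
    exact ⟨i, by omega, by rw [List.getD_eq_getElem _ _ (by omega)]⟩
  · rintro ⟨i, hi, rfl⟩
    exact ⟨i, by omega, by rw [List.getD_eq_getElem _ _ (by omega)]⟩

lemma weakReg_of_isWeaklyRegular {Q : Type*} [CommRing Q] (rs : List Q)
    (h : RingTheory.Sequence.IsWeaklyRegular Q rs) :
    WeakReg (fun k => rs.getD k 0) rs.length := by
  intro k hk x hx
  have hreg := h.regular_mod_prev k hk
  rw [seqIdeal_getD rs hk.le] at hx ⊢
  have hI : (Ideal.ofList (rs.take k) • ⊤ : Submodule Q Q) = Ideal.ofList (rs.take k) := by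
    rw [smul_eq_mul, Ideal.mul_top]
  rw [← hI] at hx ⊢
  rw [← Submodule.Quotient.mk_eq_zero]
  refine hreg ?_
  simp only [smul_zero]
  rw [← Submodule.Quotient.mk_smul, Submodule.Quotient.mk_eq_zero, smul_eq_mul]
  change rs.getD k 0 * x ∈ _ at hx
  rwa [List.getD_eq_getElem _ _ hk] at hx

/-- The completion of a Noetherian local ring, when Noetherian, has dimension at most that of the
ring. -/
lemma ringKrullDim_completion_le (A : Type*) [CommRing A] [IsLocalRing A] [IsNoetherianRing A]
    [IsNoetherianRing (AdicCompletion (maximalIdeal A) A)] :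
    ringKrullDim (AdicCompletion (maximalIdeal A) A) ≤ ringKrullDim A := by
  rw [← maximalIdeal_height_eq_ringKrullDim, ← maximalIdeal_height_eq_ringKrullDim]
  have : (maximalIdeal (AdicCompletion (maximalIdeal A) A)).LiesOver (maximalIdeal A) :=
    ⟨(maximalIdeal_comap (algebraMap A (AdicCompletion (maximalIdeal A) A))).symm⟩
  have h := Ideal.height_le_height_add_of_liesOver (maximalIdeal A)
    (maximalIdeal (AdicCompletion (maximalIdeal A) A))
  have hmap : (maximalIdeal (AdicCompletion (maximalIdeal A) A)).map (Ideal.Quotient.mk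
      ((maximalIdeal A).map (algebraMap A (AdicCompletion (maximalIdeal A) A)))) = ⊥ := by
    rw [← AdicCompletion.maximalIdeal_eq_map, Ideal.map_quotient_self]
  have : Nontrivial (AdicCompletion (maximalIdeal A) A ⧸
      (maximalIdeal A).map (algebraMap A (AdicCompletion (maximalIdeal A) A))) := by
    rw [← AdicCompletion.maximalIdeal_eq_map]
    infer_instance
  rw [hmap, Ideal.height_bot, add_zero] at h
  exact_mod_cast h

end setup

/-- The conclusion for one prime, with a single parity `r`. The bound `dim Q ≤ dim A + c` places
every degree greater than `dim A` in the range of rigidity. -/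
lemma exists_prime_mem_associatedPrimes_tor
    (A : Type u) [CommRing A] [IsLocalRing A] [IsNoetherianRing A] (Q : Type u) [CommRing Q]
    [IsLocalRing Q] [IsNoetherianRing Q] (s : Finset Q)
    (hs : Ideal.span (s : Set Q) = IsLocalRing.maximalIdeal Q)
    (hcard : (s.card : WithBot ℕ∞) = ringKrullDim Q)
    (rs : List Q) (hrs : RingTheory.Sequence.IsRegular Q rs)
    (e : (AdicCompletion (IsLocalRing.maximalIdeal A) A) ≃+* (Q ⧸ Ideal.span {x | x ∈ rs}))
    (M N : Type u) [AddCommGroup M] [Module A M] [Module.Finite A M]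
    [AddCommGroup N] [Module A N] [Module.Finite A N]
    (htor : ∃ i : ℕ, ringKrullDim A < (i : WithBot ℕ∞) ∧
      Nontrivial (((Tor (ModuleCat.{u} A) i).obj (ModuleCat.of A M)).obj (ModuleCat.of A N))) :
    ∃ p : Ideal A, p.IsPrime ∧ ∃ n₀, ∃ r, ∀ i, n₀ ≤ 2 * i + r → p ∈ associatedPrimes A
          (((Tor (ModuleCat.{u} A) (2 * i + r + 1)).obj (ModuleCat.of A M)).obj
            (ModuleCat.of A N)) := by
  obtain ⟨b, a, haa, hex, htorA⟩ := exists_tor_matrices A N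
  have : IsNoetherianRing (AdicCompletion (IsLocalRing.maximalIdeal A) A) :=
    isNoetherianRing_of_ringEquiv _ e.symm
  have hff : Module.FaithfullyFlat A (AdicCompletion (IsLocalRing.maximalIdeal A) A) :=
    Module.FaithfullyFlat.of_flat_of_isLocalHom
  have hI : seqIdeal (fun k => rs.getD k 0) rs.length = Ideal.span {x | x ∈ rs} := by
    rw [seqIdeal_getD rs le_rfl, List.take_length, Ideal.ofList]
  -- `dim Q ≤ dim Â + c`
  have hle : Ideal.span {x | x ∈ rs} ≤ IsLocalRing.maximalIdeal Q :=
    IsLocalRing.le_maximalIdeal fun h => hrs.top_ne_smul (by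
      rw [show Ideal.ofList rs = ⊤ from h, smul_eq_mul, Ideal.mul_top])
  have hdim : (s.card : WithBot ℕ∞) ≤ ringKrullDim A + rs.length := by
    classical
    have hset : {x | x ∈ rs} = (rs.toFinset : Set Q) := by ext; simp
    have h1 := ringKrullDim_le_ringKrullDim_quotient_add_card rs.toFinset (by
      rw [IsLocalRing.ringJacobson_eq_maximalIdeal, ← hset]
      exact Ideal.subset_span.trans hle)
    rw [← hset, ← ringKrullDim_eq_of_ringEquiv e] at h1
    rw [hcard]
    refine h1.trans (add_le_add (ringKrullDim_completion_le A) ?_)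
    exact_mod_cast rs.toFinset_card_le
  obtain ⟨i, hi, hnt⟩ := htor
  have h0 : 0 ≤ ringKrullDim A := ringKrullDim_nonneg_of_nontrivial
  obtain ⟨n, rfl⟩ : ∃ n, i = n + 1 := Nat.exists_eq_succ_of_ne_zero (by
    rintro rfl
    exact absurd hi (not_lt.2 (by exact_mod_cast h0)))
  have hn : s.card ≤ n + rs.length := by
    have h1 : ringKrullDim A ≤ (n : WithBot ℕ∞) := by
      rw [← IsLocalRing.maximalIdeal_height_eq_ringKrullDim] at hi ⊢
      have hi' : (IsLocalRing.maximalIdeal A).height < ((n + 1 : ℕ) : ℕ∞) := by exact_mod_cast hi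
      have : (IsLocalRing.maximalIdeal A).height ≤ (n : ℕ∞) :=
        Order.le_of_lt_add_one (by exact_mod_cast hi')
      exact_mod_cast this
    have := hdim.trans (add_le_add_left h1 _)
    exact_mod_cast this
  obtain ⟨p, hp, n₀, r, h⟩ := exists_prime_forall_mem_associatedPrimes
    (R := AdicCompletion (IsLocalRing.maximalIdeal A) A)
    PrimeSpectrum.comap_surjective_of_faithfullyFlat
    (f := fun k => rs.getD k 0) (c := rs.length) (N := s.card)
    ((e.symm : _ →+* _).comp (Ideal.Quotient.mk (Ideal.span {x | x ∈ rs})))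
    (e.symm.surjective.comp Ideal.Quotient.mk_surjective)
    (by
      ext x
      rw [hI, RingHom.mem_ker, RingHom.comp_apply, ← Ideal.Quotient.eq_zero_iff_mem]
      exact map_eq_zero_iff e.symm e.symm.injective)
    (splitsFrom_of_regular Q s hs hcard)
    (weakReg_of_isWeaklyRegular rs hrs.toIsWeaklyRegular) a haa hex M
    ⟨n, hn, by
      obtain ⟨e'⟩ := htorA M n
      exact e'.symm.toEquiv.nontrivial⟩
  refine ⟨p, hp, n₀, r, fun i hi => ?_⟩
  obtain ⟨e'⟩ := htorA M (2 * i + r)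
  rw [LinearEquiv.AssociatedPrimes.eq e']
  exact h i hi

/-- **Asymptotic associated primes of `Tor` over complete intersections.**
Let `A` be a Noetherian local complete intersection ring and `M`, `N` finitely generated
`A`-modules. If `Tor_i^A(M,N) ≠ 0` for some `i > dim A`, then there is a nonempty finite set
`𝒜` of primes of `A` such that each `p ∈ 𝒜` lies in `Ass_A(Tor_{2i}^A(M,N))` for all `i ≫ 0`,
or in `Ass_A(Tor_{2i+1}^A(M,N))` for all `i ≫ 0`. -/
theorem asymptotic_ass_tor_of_complete_intersection
    (A : Type u) [CommRing A] [IsLocalRing A] [IsNoetherianRing A]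
    (hA : IsLocalCompleteIntersection A)
    (M N : Type u) [AddCommGroup M] [Module A M] [Module.Finite A M]
    [AddCommGroup N] [Module A N] [Module.Finite A N]
    (htor : ∃ i : ℕ, ringKrullDim A < (i : WithBot ℕ∞) ∧
      Nontrivial (((Tor (ModuleCat.{u} A) i).obj (ModuleCat.of A M)).obj (ModuleCat.of A N))) :
    ∃ 𝒜 : Set (Ideal A), 𝒜.Finite ∧ 𝒜.Nonempty ∧ (∀ p ∈ 𝒜, p.IsPrime) ∧
      ∀ p ∈ 𝒜,
        (∃ i₀ : ℕ, ∀ i ≥ i₀, p ∈ associatedPrimes A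
          (((Tor (ModuleCat.{u} A) (2 * i)).obj (ModuleCat.of A M)).obj (ModuleCat.of A N))) ∨
        (∃ i₀ : ℕ, ∀ i ≥ i₀, p ∈ associatedPrimes A
          (((Tor (ModuleCat.{u} A) (2 * i + 1)).obj (ModuleCat.of A M)).obj
            (ModuleCat.of A N))) := by
  obtain ⟨Q, _, _, _, ⟨s, hs, hcard⟩, rs, hrs, ⟨e⟩⟩ := hA
  obtain ⟨p, hp, n₀, r, h⟩ :=
    exists_prime_mem_associatedPrimes_tor A Q s hs hcard rs hrs e M N htor
  refine ⟨{p}, Set.finite_singleton p, Set.singleton_nonempty p, fun _ h => h ▸ hp, ?_⟩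
  rintro _ rfl
  obtain ⟨k, rfl | rfl⟩ := Nat.even_or_odd' r
  · refine Or.inr ⟨n₀ + k, fun i hi => ?_⟩
    obtain ⟨j, rfl⟩ := Nat.exists_eq_add_of_le (show k ≤ i by omega)
    have := h j (by omega)
    rwa [show 2 * j + 2 * k + 1 = 2 * (k + j) + 1 by ring] at this
  · refine Or.inl ⟨n₀ + k + 1, fun i hi => ?_⟩
    obtain ⟨j, rfl⟩ := Nat.exists_eq_add_of_le (show k + 1 ≤ i by omega)
    have := h j (by omega)
    rwa [show 2 * j + (2 * k + 1) + 1 = 2 * (k + 1 + j) by ring] at this
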